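/- Boundary strip smallness: Let 𝒯_h be a shape-regular triangulation of a bounded polygonal domain Ω with shape regularity constant 𝒦, and let Ω_δ be a boundary strip of width of order δ attached to ∂Ω. There is a constant C depending only on Ω and 𝒦 such that ∫_{Ω_δ} u² ≤ C δ ‖u‖²_{H¹_h} for all u ∈ H¹_h. -/

import Mathlib

open MeasureTheory Set
open scoped Classical

noncomputable section

abbrev Pt : Type := EuclideanSpace ℝ (Fin 2)

structure Tri where
  A : Pt
  B : Pt
  C : Pt

namespace Tri

def cross (t : Tri) : ℝ :=
  (t.B 0 - t.A 0) * (t.C 1 - t.A 1) - (t.B 1 - t.A 1) * (t.C 0 - t.A 0)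

/-- Non-degeneracy (the three vertices are not collinear). -/
def Nondeg (t : Tri) : Prop := t.cross ≠ 0

def area (t : Tri) : ℝ := |t.cross| / 2

def la (t : Tri) : ℝ := dist t.B t.C
def lb (t : Tri) : ℝ := dist t.A t.C
def lc (t : Tri) : ℝ := dist t.A t.B

/-- Inradius of a triangle: `r = 2·Area/(a+b+c)`. -/
def inradius (t : Tri) : ℝ := 2 * t.area / (t.la + t.lb + t.lc)

/-- Circumradius of a triangle: `R = abc/(4·Area)`. -/
def circumradius (t : Tri) : ℝ := t.la * t.lb * t.lc / (4 * t.area)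

/-- Shape regularity constant `R/r` of a triangle. -/
def shapeReg (t : Tri) : ℝ := t.circumradius / t.inradius

def closedHull (t : Tri) : Set Pt := convexHull ℝ {t.A, t.B, t.C}

def openHull (t : Tri) : Set Pt := interior t.closedHull

def edgeList (t : Tri) : List (Pt × Pt) := [(t.A, t.B), (t.B, t.C), (t.C, t.A)]

end Tri

/-- Two (oriented) edges coincide as unoriented segments. -/
def SameEdge (e e' : Pt × Pt) : Prop := e' = e ∨ e' = (e.2, e.1)

/-- Arclength integral of `f` over the straight segment from `p` to `q`. -/
def segInt (p q : Pt) (f : Pt → ℝ) : ℝ :=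
  dist p q * ∫ s in (0:ℝ)..1, f (p + s • (q - p))

/-- A bounded polygonal domain in the plane. -/
def IsPolygon (Ω : Set Pt) : Prop :=
  Ω.Nonempty ∧ Bornology.IsBounded Ω ∧
    ∃ S : Finset Tri, (∀ t ∈ S, t.Nondeg) ∧ Ω = interior (⋃ t ∈ S, t.closedHull)

/-- A (conforming) triangulation of the polygonal domain `Ω`. -/
structure Triangulation (Ω : Set Pt) where
  tris : Finset Tri
  nondeg : ∀ t ∈ tris, t.Nondeg
  cover : Ω = interior (⋃ t ∈ tris, t.closedHull)
  disj : ∀ t ∈ tris, ∀ t' ∈ tris, t ≠ t' → t.openHull ∩ t'.openHull = ∅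
  conforming : ∀ t ∈ tris, ∀ e ∈ t.edgeList,
      segment ℝ e.1 e.2 ⊆ frontier Ω ∨
      ∃ t' ∈ tris, t' ≠ t ∧ ∃ e' ∈ t'.edgeList, SameEdge e e'

namespace Triangulation

variable {Ω : Set Pt}

/-- All triangles have shape regularity constant at most `K`. -/
def ShapeRegular (T : Triangulation Ω) (K : ℝ) : Prop :=
  ∀ t ∈ T.tris, t.shapeReg ≤ K

/-- `‖u‖²_{L²(Ω)}` of a piecewise function. -/
def sqL2 (T : Triangulation Ω) (u : Tri → Pt → ℝ) : ℝ :=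
  ∑ t ∈ T.tris, ∫ x in t.openHull, (u t x) ^ 2

/-- `∫_{Ω_h} |∇u|²` of a piecewise function. -/
def gradSq (T : Triangulation Ω) (u : Tri → Pt → ℝ) : ℝ :=
  ∑ t ∈ T.tris, ∫ x in t.openHull, ‖fderiv ℝ (u t) x‖ ^ 2

/-- Contribution `Σ_{e shared by t₁,t₂} |e|⁻¹ ∫_e [u]²` of the common edges of `t₁, t₂`. -/
def edgeJump (u : Tri → Pt → ℝ) (t₁ t₂ : Tri) : ℝ :=
  ((t₁.edgeList.map fun e =>
    if ∃ e' ∈ t₂.edgeList, SameEdge e e' then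
      (dist e.1 e.2)⁻¹ * segInt e.1 e.2 (fun x => (u t₁ x - u t₂ x) ^ 2)
    else 0)).sum

/-- `Σ_{e ∈ ℰ⁰_h} |e|⁻¹ ∫_e [u]²` (each interior edge counted once, whence the `1/2`). -/
def jumpSq (T : Triangulation Ω) (u : Tri → Pt → ℝ) : ℝ :=
  (1/2) * ∑ t₁ ∈ T.tris, ∑ t₂ ∈ T.tris, if t₁ ≠ t₂ then edgeJump u t₁ t₂ else 0

/-- The squared `H¹_h` norm. -/
def normSq (T : Triangulation Ω) (u : Tri → Pt → ℝ) : ℝ :=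
  T.sqL2 u + T.gradSq u + T.jumpSq u

/-- `∫_{∂Ω} u²` via the traces from the triangles having a boundary edge. -/
def bdrySq (T : Triangulation Ω) (u : Tri → Pt → ℝ) : ℝ :=
  ∑ t ∈ T.tris, ((t.edgeList.map fun e =>
    if segment ℝ e.1 e.2 ⊆ frontier Ω then segInt e.1 e.2 (fun x => (u t x) ^ 2) else 0)).sum

/-- `u` is a piecewise `H¹` function subordinate to the triangulation. -/
def PwH1 (T : Triangulation Ω) (u : Tri → Pt → ℝ) : Prop :=
  ∀ t ∈ T.tris, ContinuousOn (u t) t.closedHull ∧ DifferentiableOn ℝ (u t) t.openHull ∧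
    IntegrableOn (fun x => (u t x) ^ 2) t.openHull ∧
    IntegrableOn (fun x => ‖fderiv ℝ (u t) x‖ ^ 2) t.openHull

/-- `v : ℝ² → ℝ` is the extension by zero of the piecewise function `u`. -/
def Glues (T : Triangulation Ω) (u : Tri → Pt → ℝ) (v : Pt → ℝ) : Prop :=
  (∀ t ∈ T.tris, ∀ x ∈ t.openHull, v x = u t x) ∧ ∀ x, x ∉ Ω → v x = 0

end Triangulation


/-! ### Geometry of a triangle -/

namespace Tri

/-- Barycentric coordinate attached to `B`. -/
def lamB (t : Tri) (x : Pt) : ℝ :=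
  ((x 0 - t.A 0) * (t.C 1 - t.A 1) - (x 1 - t.A 1) * (t.C 0 - t.A 0)) / t.cross

/-- Barycentric coordinate attached to `C`. -/
def lamC (t : Tri) (x : Pt) : ℝ :=
  ((t.B 0 - t.A 0) * (x 1 - t.A 1) - (t.B 1 - t.A 1) * (x 0 - t.A 0)) / t.cross

/-- Affine parametrization. -/
def par (t : Tri) (p : ℝ × ℝ) : Pt := t.A + p.2 • (t.B - t.A) + p.1 • (t.C - t.A)

lemma lamB_par (t : Tri) (h : t.Nondeg) (p : ℝ × ℝ) : t.lamB (t.par p) = p.2 := by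
  unfold Nondeg at h
  unfold lamB par
  rw [div_eq_iff h]
  simp [cross]; ring

lemma lamC_par (t : Tri) (h : t.Nondeg) (p : ℝ × ℝ) : t.lamC (t.par p) = p.1 := by
  unfold Nondeg at h
  unfold lamC par
  rw [div_eq_iff h]
  simp [cross]; ring

lemma par_lam (t : Tri) (h : t.Nondeg) (x : Pt) : t.par (t.lamC x, t.lamB x) = x := by
  unfold Nondeg at h
  ext i
  fin_cases i
  · simp [par, lamB, lamC]
    field_simp
    unfold cross; ring
  · simp [par, lamB, lamC]
    field_simp
    unfold cross; ring

lemma continuous_lamB (t : Tri) : Continuous t.lamB := by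
  unfold lamB; fun_prop

lemma continuous_lamC (t : Tri) : Continuous t.lamC := by
  unfold lamC; fun_prop

lemma continuous_par (t : Tri) : Continuous t.par := by
  unfold par; fun_prop

/-- The reference triangle. -/
def refTri : Set (ℝ × ℝ) := {p | 0 < p.1 ∧ 0 < p.2 ∧ p.1 + p.2 < 1}

lemma closedHull_eq (t : Tri) (h : t.Nondeg) :
    t.closedHull = {x | 0 ≤ t.lamB x ∧ 0 ≤ t.lamC x ∧ t.lamB x + t.lamC x ≤ 1} := by
  apply Subset.antisymm
  · unfold closedHull
    apply convexHull_min
    · unfold Nondeg at h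
      have h1 : t.lamB t.A = 0 := by simp [lamB]
      have h2 : t.lamC t.A = 0 := by simp [lamC]
      have h3 : t.lamB t.B = 1 := by
        unfold lamB; rw [div_eq_one_iff_eq h]; rfl
      have h4 : t.lamC t.B = 0 := by simp [lamC]; left; ring
      have h5 : t.lamB t.C = 0 := by simp [lamB]; left; ring
      have h6 : t.lamC t.C = 1 := by
        unfold lamC; rw [div_eq_one_iff_eq h]; rfl
      rintro x (rfl | rfl | rfl)
      · simp [h1, h2]
      · simp [h3, h4]
      · simp [h5, h6]
    · intro x hx y hy a b ha hb hab
      have e1 : t.lamB (a • x + b • y) = a * t.lamB x + b * t.lamB y := by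
        simp [lamB]
        obtain rfl : a = 1 - b := by linarith
        ring
      have e2 : t.lamC (a • x + b • y) = a * t.lamC x + b * t.lamC y := by
        simp [lamC]
        obtain rfl : a = 1 - b := by linarith
        ring
      obtain ⟨x1, x2, x3⟩ := hx
      obtain ⟨y1, y2, y3⟩ := hy
      simp only [mem_ofPred_eq, e1, e2]
      refine ⟨by positivity, by positivity, ?_⟩
      nlinarith
  · rintro x ⟨h1, h2, h3⟩
    have := t.par_lam h x
    rw [← this]
    have hc : Convex ℝ t.closedHull := convex_convexHull _ _
    have hA : t.A ∈ t.closedHull := subset_convexHull _ _ (by simp)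
    have hB : t.B ∈ t.closedHull := subset_convexHull _ _ (by simp)
    have hC : t.C ∈ t.closedHull := subset_convexHull _ _ (by simp)
    set b := t.lamB x
    set c := t.lamC x
    have e : t.par (c, b) = ∑ i : Fin 3, (![1 - b - c, b, c] i) • (![t.A, t.B, t.C] i) := by
      rw [Fin.sum_univ_three]
      simp [par]
      module
    rw [e]
    apply hc.sum_mem
    · intro i _; fin_cases i <;> simp <;> linarith
    · rw [Fin.sum_univ_three]; simp; ring
    · intro i _; fin_cases i <;> simp [hA, hB, hC]

lemma isOpen_lamPos (t : Tri) :
    IsOpen {x | 0 < t.lamB x ∧ 0 < t.lamC x ∧ t.lamB x + t.lamC x < 1} := by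
  have h1 := t.continuous_lamB
  have h2 := t.continuous_lamC
  exact (isOpen_lt continuous_const h1).inter ((isOpen_lt continuous_const h2).inter
    (isOpen_lt (h1.add h2) continuous_const))

lemma lamPos_subset (t : Tri) (h : t.Nondeg) :
    {x | 0 < t.lamB x ∧ 0 < t.lamC x ∧ t.lamB x + t.lamC x < 1} ⊆ t.openHull := by
  apply interior_maximal _ t.isOpen_lamPos
  rw [t.closedHull_eq h]
  rintro x ⟨h1, h2, h3⟩
  exact ⟨h1.le, h2.le, h3.le⟩

lemma openHull_eq (t : Tri) (h : t.Nondeg) :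
    t.openHull = {x | 0 < t.lamB x ∧ 0 < t.lamC x ∧ t.lamB x + t.lamC x < 1} := by
  apply Subset.antisymm _ (t.lamPos_subset h)
  intro x hx
  -- move away from the centroid
  have hx' : x ∈ interior t.closedHull := hx
  set g : Pt := t.par (1/3, 1/3)
  have hcont : Filter.Tendsto (fun r : ℝ => x + r • (x - g)) (nhds 0) (nhds x) := by
    have : Continuous (fun r : ℝ => x + r • (x - g)) := by fun_prop
    simpa using this.tendsto 0
  have hev := hcont.eventually (isOpen_interior.mem_nhds hx')
  have hev2 := (hev.filter_mono (nhdsWithin_le_nhds (s := Ioi 0))).and self_mem_nhdsWithin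
  obtain ⟨r, hr, hr0⟩ := hev2.exists
  have hr0 : 0 < r := hr0
  have hm := interior_subset hr
  rw [t.closedHull_eq h] at hm
  have gB : t.lamB g = 1/3 := t.lamB_par h _
  have gC : t.lamC g = 1/3 := t.lamC_par h _
  have e1 : t.lamB (x + r • (x - g)) = t.lamB x + r * (t.lamB x - t.lamB g) := by
    simp [lamB]; ring
  have e2 : t.lamC (x + r • (x - g)) = t.lamC x + r * (t.lamC x - t.lamC g) := by
    simp [lamC]; ring
  obtain ⟨m1, m2, m3⟩ := hm
  rw [e1, gB] at m1
  rw [e2, gC] at m2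
  rw [e1, e2, gB, gC] at m3
  refine ⟨?_, ?_, ?_⟩
  · nlinarith
  · nlinarith
  · nlinarith

lemma par_mem_openHull (t : Tri) (h : t.Nondeg) (p : ℝ × ℝ) :
    t.par p ∈ t.openHull ↔ p ∈ refTri := by
  rw [t.openHull_eq h, mem_ofPred_eq, t.lamB_par h, t.lamC_par h]
  simp only [refTri, mem_ofPred_eq]
  constructor
  · rintro ⟨a, b, c⟩; exact ⟨b, a, by linarith⟩
  · rintro ⟨a, b, c⟩; exact ⟨b, a, by linarith⟩

lemma par_mem_closedHull (t : Tri) (h : t.Nondeg) (p : ℝ × ℝ) :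
    t.par p ∈ t.closedHull ↔ (0 ≤ p.1 ∧ 0 ≤ p.2 ∧ p.1 + p.2 ≤ 1) := by
  rw [t.closedHull_eq h, mem_ofPred_eq, t.lamB_par h, t.lamC_par h]
  constructor
  · rintro ⟨a, b, c⟩; exact ⟨b, a, by linarith⟩
  · rintro ⟨a, b, c⟩; exact ⟨b, a, by linarith⟩

/-- The parametrization as a homeomorphism. -/
def parHomeo (t : Tri) (h : t.Nondeg) : (ℝ × ℝ) ≃ₜ Pt where
  toFun := t.par
  invFun x := (t.lamC x, t.lamB x)
  left_inv p := by simp [t.lamB_par h, t.lamC_par h]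
  right_inv x := t.par_lam h x
  continuous_toFun := t.continuous_par
  continuous_invFun := t.continuous_lamC.prodMk t.continuous_lamB

lemma map_par (t : Tri) (h : t.Nondeg) :
    Measure.map t.par volume = ENNReal.ofReal (|t.cross|⁻¹) • (volume : Measure Pt) := by
  let M : Matrix (Fin 2) (Fin 2) ℝ :=
    !![t.C 0 - t.A 0, t.B 0 - t.A 0; t.C 1 - t.A 1, t.B 1 - t.A 1]
  have hdet : M.det = - t.cross := by
    simp [M, Matrix.det_fin_two_of, cross]; ring
  have hne : M.det ≠ 0 := by rw [hdet]; exact neg_ne_zero.mpr h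
  have h1 := Real.map_matrix_volume_pi_eq_smul_volume_pi hne
  have hf : t.par = (fun x : Pt => t.A + x) ∘ (fun v : Fin 2 → ℝ => (WithLp.toLp 2 v : Pt)) ∘
      (Matrix.toLin' M) ∘ (MeasurableEquiv.finTwoArrow (α := ℝ)).symm := by
    funext p
    ext i
    fin_cases i
    · simp [par, M, MeasurableEquiv.finTwoArrow]; ring
    · simp [par, M, MeasurableEquiv.finTwoArrow]; ring
  have m1 : Measurable (fun x : Pt => t.A + x) := by fun_prop
  have m2 : Measurable (fun v : Fin 2 → ℝ => (WithLp.toLp 2 v : Pt)) :=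
    (PiLp.volume_preserving_toLp (Fin 2)).measurable
  have m3 : Measurable (Matrix.toLin' M) :=
    (LinearMap.continuous_of_finiteDimensional _).measurable
  have m4 := (MeasurableEquiv.finTwoArrow (α := ℝ)).symm.measurable
  rw [hf, ← Measure.map_map m1 (m2.comp (m3.comp m4)), ← Measure.map_map m2 (m3.comp m4),
    ← Measure.map_map m3 m4]
  rw [((volume_preserving_finTwoArrow ℝ).symm _).map_eq, h1, Measure.map_smul,
    (PiLp.volume_preserving_toLp (Fin 2)).map_eq, Measure.map_smul,
    (measurePreserving_add_left volume t.A).map_eq, hdet, abs_inv, abs_neg]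

lemma integral_par (t : Tri) (h : t.Nondeg) (f : Pt → ℝ) :
    ∫ x, f x = |t.cross| * ∫ p, f (t.par p) := by
  have h1 : ∫ p, f (t.par p) = ∫ x, f x ∂(Measure.map t.par volume) :=
    ((t.parHomeo h).measurableEmbedding.integral_map f).symm
  have hc : 0 < |t.cross| := abs_pos.mpr h
  rw [h1, t.map_par h, integral_smul_measure, ENNReal.toReal_ofReal (by positivity)]
  simp only [smul_eq_mul]
  field_simp

lemma integrable_par (t : Tri) (h : t.Nondeg) (f : Pt → ℝ) (hf : Integrable f) :
    Integrable (fun p => f (t.par p)) := by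
  have := (t.parHomeo h).measurableEmbedding.integrable_map_iff (g := f) (μ := volume)
  refine this.mp ?_
  change Integrable f (Measure.map t.par volume)
  rw [t.map_par h]
  exact hf.smul_measure ENNReal.ofReal_ne_top

end Tri

/-! ### Integration by parts on a triangle -/

namespace Tri

lemma int_e1 (t : Tri) (h : t.Nondeg) (g : Pt → ℝ) (hc : ContinuousOn g t.closedHull)
    (hd : ∀ x ∈ t.openHull, DifferentiableAt ℝ g x)
    (hi : IntegrableOn (fun x => fderiv ℝ g x (t.B - t.A)) t.openHull) :
    ∫ x in t.openHull, fderiv ℝ g x (t.B - t.A) =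
      |t.cross| * ((∫ y in (0:ℝ)..1, g (t.par (y, 1 - y))) - ∫ y in (0:ℝ)..1, g (t.par (y, 0))) := by
  have hmeas : MeasurableSet t.openHull := isOpen_interior.measurableSet
  rw [← integral_indicator hmeas, t.integral_par h]
  congr 1
  have hi' : Integrable (fun p => (t.openHull.indicator
      (fun x => fderiv ℝ g x (t.B - t.A))) (t.par p)) :=
    t.integrable_par h _ ((integrable_indicator_iff hmeas).mpr hi)
  have hi2 : Integrable (fun p : ℝ × ℝ => (t.openHull.indicator
      (fun x => fderiv ℝ g x (t.B - t.A))) (t.par p)) (volume.prod volume) := hi'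
  have hcB : ContinuousOn (fun y : ℝ => g (t.par (y, 1 - y))) (Icc 0 1) := by
    apply hc.comp
    · have := t.continuous_par
      fun_prop
    · intro y hy
      rw [t.par_mem_closedHull h]
      exact ⟨hy.1, by simpa using hy.2, by simp⟩
  have hcA : ContinuousOn (fun y : ℝ => g (t.par (y, 0))) (Icc 0 1) := by
    apply hc.comp
    · have := t.continuous_par
      fun_prop
    · intro y hy
      rw [t.par_mem_closedHull h]
      exact ⟨hy.1, by simp, by simpa using hy.2⟩
  rw [← intervalIntegral.integral_sub
    (ContinuousOn.intervalIntegrable (by rwa [uIcc_of_le zero_le_one]))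
    (ContinuousOn.intervalIntegrable (by rwa [uIcc_of_le zero_le_one]))]
  rw [intervalIntegral.integral_of_le zero_le_one, integral_Ioc_eq_integral_Ioo,
    ← integral_indicator measurableSet_Ioo]
  have e0 := integral_prod _ hi2
  refine Eq.trans e0 ?_
  apply integral_congr_ae
  filter_upwards [hi2.prod_right_ae] with y hy
  by_cases hy01 : y ∈ Ioo (0:ℝ) 1
  · rw [indicator_of_mem hy01]
    have hy1 : (0:ℝ) ≤ 1 - y := by linarith [hy01.2]
    have hind : ∀ x : ℝ, t.openHull.indicator (fun x => fderiv ℝ g x (t.B - t.A)) (t.par (y, x)) =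
        (Ioo (0:ℝ) (1 - y)).indicator (fun x => fderiv ℝ g (t.par (y, x)) (t.B - t.A)) x := by
      intro x
      by_cases hx : x ∈ Ioo (0:ℝ) (1 - y)
      · rw [indicator_of_mem hx, indicator_of_mem]
        rw [t.par_mem_openHull h]
        exact ⟨hy01.1, hx.1, by simpa using by linarith [hx.2]⟩
      · rw [indicator_of_notMem hx, indicator_of_notMem]
        rw [t.par_mem_openHull h]
        rintro ⟨_, h2, h3⟩
        exact hx ⟨h2, by simp at h3; linarith⟩
    simp_rw [hind] at hy ⊢
    rw [integral_indicator measurableSet_Ioo, ← integral_Ioc_eq_integral_Ioo,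
      ← intervalIntegral.integral_of_le hy1]
    have hIntg := (integrable_indicator_iff measurableSet_Ioo).mp hy
    have := intervalIntegral.integral_eq_sub_of_hasDerivAt_of_le (f := fun x => g (t.par (y, x)))
      (f' := fun x => fderiv ℝ g (t.par (y, x)) (t.B - t.A)) hy1 ?_ ?_ ?_
    · exact this
    · apply hc.comp
      · have := t.continuous_par
        fun_prop
      · intro x hx
        rw [t.par_mem_closedHull h]
        exact ⟨hy01.1.le, hx.1, by simpa using by linarith [hx.2]⟩
    · intro x hx
      have hm : t.par (y, x) ∈ t.openHull := by
        rw [t.par_mem_openHull h]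
        exact ⟨hy01.1, hx.1, by simpa using by linarith [hx.2]⟩
      have h1 := (hd _ hm).hasFDerivAt
      have h2 : HasDerivAt (fun x : ℝ => t.par (y, x)) (t.B - t.A) x := by
        unfold par
        have := (((hasDerivAt_id x).smul_const (t.B - t.A)).const_add t.A).add_const
          (y • (t.C - t.A))
        simpa using this
      exact h1.comp_hasDerivAt x h2
    · rw [intervalIntegrable_iff_integrableOn_Ioo_of_le hy1]
      exact hIntg
  · rw [indicator_of_notMem hy01]
    have hind : ∀ x : ℝ, t.openHull.indicator (fun x => fderiv ℝ g x (t.B - t.A)) (t.par (y, x)) =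
        0 := by
      intro x
      rw [indicator_of_notMem]
      rw [t.par_mem_openHull h]
      rintro ⟨h1, h2, h3⟩
      simp at h1 h2 h3
      exact hy01 ⟨h1, by linarith⟩
    simp_rw [hind]
    simp

/-- Mean value along a segment. -/
def seg (g : Pt → ℝ) (p q : Pt) : ℝ := ∫ s in (0:ℝ)..1, g (p + s • (q - p))

lemma seg_swap (g : Pt → ℝ) (p q : Pt) : seg g q p = seg g p q := by
  unfold seg
  have := intervalIntegral.integral_comp_sub_left (a := 0) (b := 1)
    (fun s : ℝ => g (p + s • (q - p))) 1
  simp only [sub_self, sub_zero] at this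
  rw [← this]
  congr 1
  funext s
  congr 1
  module

/-- Planar determinant. -/
def dd (v w : Pt) : ℝ := v 0 * w 1 - v 1 * w 0

/-- Orientation sign. -/
def sg (t : Tri) : ℝ := |t.cross| / t.cross

lemma int_dir (t : Tri) (h : t.Nondeg) (g : Pt → ℝ) (hc : ContinuousOn g t.closedHull)
    (hd : ∀ x ∈ t.openHull, DifferentiableAt ℝ g x)
    (hi : ∀ d, IntegrableOn (fun x => fderiv ℝ g x d) t.openHull) (d : Pt) :
    ∫ x in t.openHull, fderiv ℝ g x d =
      t.sg * (dd d (t.B - t.A) * seg g t.A t.B + dd d (t.C - t.B) * seg g t.B t.C +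
        dd d (t.A - t.C) * seg g t.C t.A) := by
  have h1 := t.int_e1 h g hc hd (hi _)
  let t' : Tri := ⟨t.A, t.C, t.B⟩
  have hcr : t'.cross = - t.cross := by simp [t', cross]; ring
  have hn' : t'.Nondeg := by
    unfold Nondeg; rw [hcr]; exact neg_ne_zero.mpr h
  have hcl : t'.closedHull = t.closedHull := by
    simp only [closedHull, t']
    congr 1
    ext x
    simp; tauto
  have hop : t'.openHull = t.openHull := by unfold openHull; rw [hcl]
  have h2 := t'.int_e1 hn' g (by rwa [hcl]) (by rwa [hop]) (by rw [hop]; exact hi _)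
  rw [hop, hcr, abs_neg] at h2
  have s1 : (∫ y in (0:ℝ)..1, g (t.par (y, 1 - y))) = seg g t.B t.C := by
    unfold seg; congr 1; funext s; congr 1; simp only [par]; module
  have s2 : (∫ y in (0:ℝ)..1, g (t.par (y, 0))) = seg g t.C t.A := by
    rw [seg_swap]
    unfold seg; congr 1; funext s; congr 1; simp only [par]; module
  have s3 : (∫ y in (0:ℝ)..1, g (t'.par (y, 1 - y))) = seg g t.B t.C := by
    rw [seg_swap]
    unfold seg; congr 1; funext s; congr 1; simp only [par, t']; module
  have s4 : (∫ y in (0:ℝ)..1, g (t'.par (y, 0))) = seg g t.A t.B := by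
    unfold seg; congr 1; funext s; congr 1; simp only [par, t']; module
  rw [s1, s2] at h1
  rw [s3, s4] at h2
  have hcr0 : t.cross ≠ 0 := h
  have hdec : d = (dd d (t.C - t.A) / t.cross) • (t.B - t.A) +
      (dd (t.B - t.A) d / t.cross) • (t.C - t.A) := by
    ext i
    fin_cases i
    · simp [dd]
      field_simp
      unfold cross; ring
    · simp [dd]
      field_simp
      unfold cross; ring
  set β := dd d (t.C - t.A) / t.cross with hβ
  set γ := dd (t.B - t.A) d / t.cross with hγ
  have e1 : ∫ x in t.openHull, fderiv ℝ g x d =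
      β * (∫ x in t.openHull, fderiv ℝ g x (t.B - t.A)) +
      γ * (∫ x in t.openHull, fderiv ℝ g x (t.C - t.A)) := by
    rw [← integral_const_mul, ← integral_const_mul, ← integral_add ((hi _).const_mul _)
      ((hi _).const_mul _)]
    congr 1
    funext x
    conv_lhs => rw [hdec]
    simp
  have h2' : ∫ x in t.openHull, fderiv ℝ g x (t.C - t.A) =
    |t.cross| * (seg g t.B t.C - seg g t.A t.B) := h2
  rw [e1, h1, h2', hβ, hγ]
  unfold sg
  field_simp
  simp [dd]
  ring

end Tri

/-! ### Divergence identity for radial fields, trace inequality -/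

namespace Tri

lemma convex_closedHull (t : Tri) : Convex ℝ t.closedHull := convex_convexHull _ _

lemma isCompact_closedHull (t : Tri) : IsCompact t.closedHull :=
  (Set.toFinite _).isCompact_convexHull (𝕜 := ℝ)

lemma openHull_subset (t : Tri) : t.openHull ⊆ t.closedHull := interior_subset

lemma measurableSet_openHull (t : Tri) : MeasurableSet t.openHull :=
  isOpen_interior.measurableSet

lemma volume_openHull_lt_top (t : Tri) : volume t.openHull < ⊤ :=
  (measure_mono t.openHull_subset).trans_lt t.isCompact_closedHull.measure_lt_top

lemma A_mem (t : Tri) : t.A ∈ t.closedHull := subset_convexHull _ _ (by simp)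
lemma B_mem (t : Tri) : t.B ∈ t.closedHull := subset_convexHull _ _ (by simp)
lemma C_mem (t : Tri) : t.C ∈ t.closedHull := subset_convexHull _ _ (by simp)

lemma path_mem (t : Tri) {p q : Pt} (hp : p ∈ t.closedHull) (hq : q ∈ t.closedHull) {s : ℝ}
    (hs : s ∈ Icc (0:ℝ) 1) : p + s • (q - p) ∈ t.closedHull :=
  t.convex_closedHull.add_smul_sub_mem hp hq hs

lemma path_cont (t : Tri) {g : Pt → ℝ} (hc : ContinuousOn g t.closedHull) {p q : Pt}
    (hp : p ∈ t.closedHull) (hq : q ∈ t.closedHull) :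
    ContinuousOn (fun s : ℝ => g (p + s • (q - p))) (uIcc 0 1) := by
  rw [uIcc_of_le zero_le_one]
  apply hc.comp (by fun_prop)
  intro s hs
  exact t.path_mem hp hq hs

lemma path_int (t : Tri) {g : Pt → ℝ} (hc : ContinuousOn g t.closedHull) {p q : Pt}
    (hp : p ∈ t.closedHull) (hq : q ∈ t.closedHull) :
    IntervalIntegrable (fun s : ℝ => g (p + s • (q - p))) volume 0 1 :=
  (t.path_cont hc hp hq).intervalIntegrable

/-- unit vectors -/
def ee (i : Fin 2) : Pt := EuclideanSpace.single i 1

lemma decomp (v : Pt) : v = v 0 • ee 0 + v 1 • ee 1 := by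
  ext i; fin_cases i <;> simp [ee]

lemma coord_le (v : Pt) (i : Fin 2) : |v i| ≤ ‖v‖ := by
  simpa using PiLp.norm_apply_le v i

lemma int_field (t : Tri) (h : t.Nondeg) (w : Pt → ℝ) (hc : ContinuousOn w t.closedHull)
    (hd : ∀ x ∈ t.openHull, DifferentiableAt ℝ w x)
    (hi : IntegrableOn (fun x => ‖fderiv ℝ w x‖) t.openHull)
    (ψ : Pt → ℝ) (hψ : Differentiable ℝ ψ) (M : ℝ) (hM : ∀ x, ‖fderiv ℝ ψ x‖ ≤ M) (z : Pt) :
    IntegrableOn (fun x => ψ x * fderiv ℝ w x (z - x) + w x * fderiv ℝ ψ x (z - x)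
      - 2 * (w x * ψ x)) t.openHull ∧
    ∫ x in t.openHull, (ψ x * fderiv ℝ w x (z - x) + w x * fderiv ℝ ψ x (z - x)
      - 2 * (w x * ψ x)) =
      t.sg * (seg (fun x => w x * ψ x * dd (z - x) (t.B - t.A)) t.A t.B +
        seg (fun x => w x * ψ x * dd (z - x) (t.C - t.B)) t.B t.C +
        seg (fun x => w x * ψ x * dd (z - x) (t.A - t.C)) t.C t.A) := by
  let g : Fin 2 → Pt → ℝ := fun i x => w x * ψ x * (z i - x i)
  have hψc : Continuous ψ := hψ.continuous
  have hgc : ∀ i, ContinuousOn (g i) t.closedHull := by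
    intro i
    have : ContinuousOn (fun x : Pt => z i - x i) t.closedHull := by fun_prop
    exact (hc.mul hψc.continuousOn).mul this
  have hgd : ∀ i, ∀ x ∈ t.openHull, HasFDerivAt (g i)
      ((w x * ψ x) • (-(EuclideanSpace.proj i : Pt →L[ℝ] ℝ)) +
        (z i - x i) • (w x • fderiv ℝ ψ x + ψ x • fderiv ℝ w x)) x := by
    intro i x hx
    have h1 : HasFDerivAt (fun y : Pt => z i - y i) (-(EuclideanSpace.proj i : Pt →L[ℝ] ℝ)) x :=
      ((EuclideanSpace.proj i : Pt →L[ℝ] ℝ).hasFDerivAt).const_sub (z i)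
    exact ((hd x hx).hasFDerivAt.mul (hψ x).hasFDerivAt).mul h1
  have hgf : ∀ i, ∀ x ∈ t.openHull, ∀ v, fderiv ℝ (g i) x v = -(w x * ψ x * v i) +
      (z i - x i) * (w x * fderiv ℝ ψ x v + ψ x * fderiv ℝ w x v) := by
    intro i x hx v
    rw [(hgd i x hx).fderiv]
    simp
    ring
  obtain ⟨Cw, hCw⟩ := t.isCompact_closedHull.exists_bound_of_continuousOn hc
  obtain ⟨Cψ, hCψ⟩ := t.isCompact_closedHull.exists_bound_of_continuousOn hψc.continuousOn
  obtain ⟨Cz, hCz⟩ := t.isCompact_closedHull.exists_bound_of_continuousOn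
    (f := fun x : Pt => z - x) (by fun_prop)
  have hgi : ∀ i, ∀ d, IntegrableOn (fun x => fderiv ℝ (g i) x d) t.openHull := by
    intro i d
    have hb : IntegrableOn (fun x => Cw * Cψ * ‖d‖ + Cz * (Cw * (M * ‖d‖) +
        Cψ * (‖fderiv ℝ w x‖ * ‖d‖))) t.openHull := by
      have hk : ∀ c : ℝ, IntegrableOn (fun _ : Pt => c) t.openHull := fun c =>
        integrableOn_const t.volume_openHull_lt_top.ne
      exact (hk _).add (((hk _).add ((hi.mul_const _).const_mul _)).const_mul _)
    refine Integrable.mono' hb (measurable_fderiv_apply_const ℝ (g i) d).aestronglyMeasurable ?_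
    filter_upwards [ae_restrict_mem t.measurableSet_openHull] with x hx
    rw [hgf i x hx]
    have hx' := t.openHull_subset hx
    have b1 := hCw x hx'
    have b2 := hCψ x hx'
    have b3 : |z i - x i| ≤ Cz := (coord_le (z - x) i).trans (hCz x hx')
    have b4 : |fderiv ℝ ψ x d| ≤ M * ‖d‖ := ((fderiv ℝ ψ x).le_opNorm d).trans
      (mul_le_mul_of_nonneg_right (hM x) (norm_nonneg _))
    have b5 : |fderiv ℝ w x d| ≤ ‖fderiv ℝ w x‖ * ‖d‖ := (fderiv ℝ w x).le_opNorm d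
    have b6 := coord_le d i
    rw [Real.norm_eq_abs] at b1 b2 ⊢
    have p1 : 0 ≤ Cw := (abs_nonneg _).trans b1
    have p2 : 0 ≤ Cψ := (abs_nonneg _).trans b2
    have p3 : 0 ≤ Cz := (abs_nonneg _).trans b3
    calc _ ≤ |w x| * |ψ x| * |d i| + |z i - x i| * (|w x| * |fderiv ℝ ψ x d| +
          |ψ x| * |fderiv ℝ w x d|) := by
          refine (abs_add_le _ _).trans ?_
          rw [abs_neg, abs_mul, abs_mul, abs_mul]
          gcongr
          refine (abs_add_le _ _).trans ?_
          rw [abs_mul, abs_mul]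
      _ ≤ _ := by gcongr
  have key : ∀ i d, _ := fun i d => t.int_dir h (g i) (hgc i)
    (fun x hx => (hgd i x hx).differentiableAt) (hgi i) d
  have k0 := key 0 (ee 0)
  have k1 := key 1 (ee 1)
  have hpt : ∀ x ∈ t.openHull, fderiv ℝ (g 0) x (ee 0) + fderiv ℝ (g 1) x (ee 1) =
      ψ x * fderiv ℝ w x (z - x) + w x * fderiv ℝ ψ x (z - x) - 2 * (w x * ψ x) := by
    intro x hx
    rw [hgf 0 x hx, hgf 1 x hx]
    rw [decomp (z - x)]
    simp [ee]
    ring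
  have hIntg : IntegrableOn (fun x => ψ x * fderiv ℝ w x (z - x) + w x * fderiv ℝ ψ x (z - x)
      - 2 * (w x * ψ x)) t.openHull :=
    ((hgi 0 (ee 0)).add (hgi 1 (ee 1))).congr_fun hpt t.measurableSet_openHull
  refine ⟨hIntg, ?_⟩
  have hL : ∫ x in t.openHull, (ψ x * fderiv ℝ w x (z - x) + w x * fderiv ℝ ψ x (z - x)
      - 2 * (w x * ψ x)) = (∫ x in t.openHull, fderiv ℝ (g 0) x (ee 0)) +
        ∫ x in t.openHull, fderiv ℝ (g 1) x (ee 1) := by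
    rw [← integral_add (hgi _ _) (hgi _ _)]
    apply setIntegral_congr_fun t.measurableSet_openHull
    intro x hx
    exact (hpt x hx).symm
  have hseg : ∀ p ∈ t.closedHull, ∀ q ∈ t.closedHull,
      seg (fun x => w x * ψ x * dd (z - x) (q - p)) p q =
      dd (ee 0) (q - p) * seg (g 0) p q + dd (ee 1) (q - p) * seg (g 1) p q := by
    intro p hp q hq
    unfold seg
    rw [← intervalIntegral.integral_const_mul, ← intervalIntegral.integral_const_mul,
      ← intervalIntegral.integral_add ((t.path_int (hgc 0) hp hq).const_mul _)
      ((t.path_int (hgc 1) hp hq).const_mul _)]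
    congr 1
    funext s
    simp [g, dd, ee]
    ring
  rw [hL, k0, k1, hseg _ t.A_mem _ t.B_mem, hseg _ t.B_mem _ t.C_mem, hseg _ t.C_mem _ t.A_mem]
  ring

/-- cyclic rotation of the vertices -/
def rot (t : Tri) : Tri := ⟨t.B, t.C, t.A⟩

lemma rot_cross (t : Tri) : t.rot.cross = t.cross := by simp [rot, cross]; ring
lemma rot_nondeg {t : Tri} (h : t.Nondeg) : t.rot.Nondeg := by
  unfold Nondeg; rw [rot_cross]; exact h
lemma rot_closedHull (t : Tri) : t.rot.closedHull = t.closedHull := by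
  simp only [closedHull, rot]
  congr 1
  ext x
  simp; tauto
lemma rot_openHull (t : Tri) : t.rot.openHull = t.openHull := by
  unfold openHull; rw [rot_closedHull]

lemma grad_sq_int (t : Tri) (u : Pt → ℝ) (hc : ContinuousOn u t.closedHull)
    (h1 : IntegrableOn (fun x => (u x) ^ 2) t.openHull)
    (h2 : IntegrableOn (fun x => ‖fderiv ℝ u x‖ ^ 2) t.openHull) :
    IntegrableOn (fun x => 2 * |u x| * ‖fderiv ℝ u x‖) t.openHull := by
  refine Integrable.mono' (h1.add h2) ?_ ?_
  · have m1 : AEStronglyMeasurable u (volume.restrict t.openHull) :=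
      (hc.mono t.openHull_subset).aestronglyMeasurable t.measurableSet_openHull
    have m2 : AEStronglyMeasurable (fun x => ‖fderiv ℝ u x‖) (volume.restrict t.openHull) :=
      (measurable_fderiv ℝ u).norm.aestronglyMeasurable
    exact (m1.norm.const_mul 2).mul m2
  · filter_upwards with x
    simp only [Pi.add_apply, Real.norm_eq_abs]
    rw [abs_of_nonneg (by positivity)]
    nlinarith [sq_nonneg (|u x| - ‖fderiv ℝ u x‖), sq_abs (u x)]

lemma fderiv_sq {u : Pt → ℝ} {x : Pt} (hd : DifferentiableAt ℝ u x) :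
    fderiv ℝ (fun y => (u y) ^ 2) x = (2 * u x) • fderiv ℝ u x := by
  have := (hd.hasFDerivAt.pow 2).fderiv
  rw [this]
  simp

lemma sq_grad_int (t : Tri) (u : Pt → ℝ) (hc : ContinuousOn u t.closedHull)
    (hd : ∀ x ∈ t.openHull, DifferentiableAt ℝ u x)
    (h1 : IntegrableOn (fun x => (u x) ^ 2) t.openHull)
    (h2 : IntegrableOn (fun x => ‖fderiv ℝ u x‖ ^ 2) t.openHull) :
    IntegrableOn (fun x => ‖fderiv ℝ (fun y => (u y) ^ 2) x‖) t.openHull := by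
  refine (t.grad_sq_int u hc h1 h2).congr_fun ?_ t.measurableSet_openHull
  intro x hx
  simp only
  rw [fderiv_sq (hd x hx), norm_smul]
  simp

/-- Trace inequality on the edge `AB`. -/
lemma trace_AB (t : Tri) (h : t.Nondeg) (u : Pt → ℝ) (hc : ContinuousOn u t.closedHull)
    (hd : ∀ x ∈ t.openHull, DifferentiableAt ℝ u x)
    (h1 : IntegrableOn (fun x => (u x) ^ 2) t.openHull)
    (h2 : IntegrableOn (fun x => ‖fderiv ℝ u x‖ ^ 2) t.openHull)
    (D : ℝ) (hD : ∀ x ∈ t.openHull, ‖t.C - x‖ ≤ D) :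
    |t.cross| * seg (fun x => (u x) ^ 2) t.A t.B ≤
      3 * (∫ x in t.openHull, (u x) ^ 2) + D ^ 2 * ∫ x in t.openHull, ‖fderiv ℝ u x‖ ^ 2 := by
  obtain ⟨hIntg, key⟩ := t.int_field h (fun x => (u x) ^ 2) (hc.pow 2) (fun x hx => (hd x hx).pow 2)
    (t.sq_grad_int u hc hd h1 h2) (fun _ => 1) (differentiable_const _) 0 (by simp) t.C
  have e2 : seg (fun x => (u x) ^ 2 * 1 * dd (t.C - x) (t.C - t.B)) t.B t.C = 0 := by
    unfold seg
    apply intervalIntegral.integral_zero_ae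
    filter_upwards with s _
    simp [dd]; right; ring
  have e3 : seg (fun x => (u x) ^ 2 * 1 * dd (t.C - x) (t.A - t.C)) t.C t.A = 0 := by
    unfold seg
    apply intervalIntegral.integral_zero_ae
    filter_upwards with s _
    simp [dd]; right; ring
  have e1 : seg (fun x => (u x) ^ 2 * 1 * dd (t.C - x) (t.B - t.A)) t.A t.B =
      (- t.cross) * seg (fun x => (u x) ^ 2) t.A t.B := by
    unfold seg
    rw [← intervalIntegral.integral_const_mul]
    congr 1
    funext s
    simp [dd, cross]; ring
  rw [e1, e2, e3] at key
  have hs : t.sg * t.cross = |t.cross| := by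
    unfold sg; exact div_mul_cancel₀ _ h
  have key2 : |t.cross| * seg (fun x => (u x) ^ 2) t.A t.B =
      - ∫ x in t.openHull, (1 * fderiv ℝ (fun x => (u x) ^ 2) x (t.C - x) +
        (u x) ^ 2 * fderiv ℝ (fun _ : Pt => (1:ℝ)) x (t.C - x) - 2 * ((u x) ^ 2 * 1)) := by
    rw [key, ← hs]; ring
  rw [key2, ← integral_neg, ← integral_const_mul, ← integral_const_mul,
    ← integral_add (h1.const_mul _) (h2.const_mul _)]
  apply setIntegral_mono_on hIntg.neg ((h1.const_mul _).add (h2.const_mul _))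
    t.measurableSet_openHull
  intro x hx
  simp only [Pi.neg_apply, Pi.add_apply]
  rw [fderiv_sq (hd x hx)]
  simp only [fderiv_fun_const, Pi.zero_apply, _root_.zero_apply, mul_zero, add_zero,
    one_mul, mul_one, _root_.smul_apply, smul_eq_mul]
  have b1 : |fderiv ℝ u x (t.C - x)| ≤ ‖fderiv ℝ u x‖ * D :=
    ((fderiv ℝ u x).le_opNorm _).trans (mul_le_mul_of_nonneg_left (hD x hx) (norm_nonneg _))
  have b2 : -(2 * u x * fderiv ℝ u x (t.C - x)) ≤ (u x) ^ 2 + (fderiv ℝ u x (t.C - x)) ^ 2 := by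
    nlinarith [sq_nonneg (u x + fderiv ℝ u x (t.C - x))]
  have b3 : (fderiv ℝ u x (t.C - x)) ^ 2 ≤ (‖fderiv ℝ u x‖ * D) ^ 2 :=
    sq_le_sq' (by linarith [neg_abs_le (fderiv ℝ u x (t.C - x))]) ((le_abs_self _).trans b1)
  nlinarith

end Tri

/-! ### The cutoff function -/

section Cut

variable (L : Fin 3 → Pt →L[ℝ] ℝ) (c : Fin 3 → ℝ)

/-- affine function -/
def laff (i : Fin 3) (x : Pt) : ℝ := L i x + c i

/-- sum of inverses -/
def cutP (s : ℝ) (x : Pt) : ℝ := ∑ i, (laff L c i x)⁻¹ + s⁻¹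

/-- smooth cutoff -/
def cut (s ε : ℝ) (x : Pt) : ℝ :=
  if ∀ i, 0 < laff L c i x then (cutP L c s x + ε * cutP L c s x ^ 2)⁻¹ else 0

/-- multiplier -/
def cutm (s ε : ℝ) (x : Pt) : ℝ := (1 + 2 * ε * cutP L c s x) / (1 + ε * cutP L c s x) ^ 2

variable {L c} {s ε : ℝ}

lemma cutP_ge_inv (hs : 0 < s) {x : Pt} (hx : ∀ i, 0 < laff L c i x) (i : Fin 3) :
    (laff L c i x)⁻¹ ≤ cutP L c s x := by
  unfold cutP
  have := Finset.single_le_sum (f := fun i => (laff L c i x)⁻¹)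
    (fun j _ => (inv_pos.mpr (hx j)).le) (Finset.mem_univ i)
  have h2 := inv_pos.mpr hs
  linarith

lemma cutP_ge (_hs : 0 < s) {x : Pt} (hx : ∀ i, 0 < laff L c i x) : s⁻¹ ≤ cutP L c s x := by
  unfold cutP
  have := Finset.sum_nonneg (s := Finset.univ) (f := fun i => (laff L c i x)⁻¹)
    (fun j _ => (inv_pos.mpr (hx j)).le)
  linarith

lemma cutP_pos (hs : 0 < s) {x : Pt} (hx : ∀ i, 0 < laff L c i x) : 0 < cutP L c s x :=
  (inv_pos.mpr hs).trans_le (cutP_ge hs hx)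

lemma cut_nonneg (hs : 0 < s) (hε : 0 < ε) (x : Pt) : 0 ≤ cut L c s ε x := by
  unfold cut
  split_ifs with hx
  · have := cutP_pos hs hx
    positivity
  · exact le_rfl

lemma cut_le (hs : 0 < s) (hε : 0 < ε) (x : Pt) : cut L c s ε x ≤ s := by
  unfold cut
  split_ifs with hx
  · have h1 := cutP_ge hs hx
    have h2 := cutP_pos hs hx
    rw [inv_le_comm₀ (by positivity) hs]
    have : 0 ≤ ε * cutP L c s x ^ 2 := by positivity
    linarith
  · exact hs.le

lemma cut_zero {x : Pt} (hx : ¬ ∀ i, 0 < laff L c i x) : cut L c s ε x = 0 := if_neg hx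

lemma continuous_laff (i : Fin 3) : Continuous (laff L c i) := by
  unfold laff; fun_prop

lemma isOpen_laff : IsOpen {x | ∀ i, 0 < laff L c i x} := by
  have : {x | ∀ i, 0 < laff L c i x} = ⋂ i, {x | 0 < laff L c i x} := by ext; simp
  rw [this]
  exact isOpen_iInter_of_finite fun i => isOpen_lt continuous_const (continuous_laff i)

lemma cut_hasFDerivAt_out (hs : 0 < s) (hε : 0 < ε) {x : Pt} (hx : ¬ ∀ i, 0 < laff L c i x) :
    HasFDerivAt (cut L c s ε) (0 : Pt →L[ℝ] ℝ) x := by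
  have hO : (cut L c s ε) =O[nhds x] (fun y => ‖y - x‖ ^ 2) := by
    push Not at hx
    obtain ⟨i, hi⟩ := hx
    apply Asymptotics.IsBigO.of_bound (‖L i‖ ^ 2 / ε)
    filter_upwards with y
    rw [Real.norm_of_nonneg (cut_nonneg hs hε y), Real.norm_of_nonneg (by positivity)]
    unfold cut
    split_ifs with hy
    · have h1 := cutP_ge_inv hs hy i
      have h2 := cutP_pos hs hy
      have hl : laff L c i y ≤ ‖L i‖ * ‖y - x‖ := by
        have : laff L c i y ≤ L i (y - x) := by
          unfold laff at hi ⊢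
          rw [map_sub]; linarith
        exact this.trans ((le_abs_self _).trans ((L i).le_opNorm _))
      have hp := hy i
      have h3 : ε * (laff L c i y)⁻¹ ^ 2 ≤ cutP L c s y + ε * cutP L c s y ^ 2 := by
        have : ε * (laff L c i y)⁻¹ ^ 2 ≤ ε * cutP L c s y ^ 2 := by gcongr
        linarith
      calc (cutP L c s y + ε * cutP L c s y ^ 2)⁻¹ ≤ (ε * (laff L c i y)⁻¹ ^ 2)⁻¹ := by
            gcongr
        _ = laff L c i y ^ 2 / ε := by field_simp
        _ ≤ (‖L i‖ * ‖y - x‖) ^ 2 / ε := by gcongr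
        _ = _ := by ring
    · positivity
  exact hO.hasFDerivAt (by norm_num)

lemma cut_hasFDerivAt_in (hs : 0 < s) (hε : 0 < ε) {x : Pt} (hx : ∀ i, 0 < laff L c i x) :
    HasFDerivAt (cut L c s ε) ((cutm L c s ε x / cutP L c s x ^ 2) •
      ∑ i, ((laff L c i x)⁻¹ ^ 2) • L i : Pt →L[ℝ] ℝ) x := by
  have h2 := cutP_pos hs hx
  have hl : ∀ i, HasFDerivAt (laff L c i) (L i) x := fun i => (L i).hasFDerivAt.add_const _
  have hinv : ∀ i, HasFDerivAt (fun y => (laff L c i y)⁻¹) (-((laff L c i x)⁻¹ ^ 2) • L i) x := by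
    intro i
    have := (hasDerivAt_inv (hx i).ne').comp_hasFDerivAt x (hl i)
    refine this.congr_fderiv ?_
    ext v
    simp [inv_pow]
  have hP : HasFDerivAt (cutP L c s) (∑ i, -((laff L c i x)⁻¹ ^ 2) • L i) x := by
    have := (HasFDerivAt.fun_sum (u := Finset.univ) (fun i _ => hinv i)).add_const s⁻¹
    exact this
  have hφ : HasDerivAt (fun p : ℝ => (p + ε * p ^ 2)⁻¹)
      (-(1 + ε * (2 * cutP L c s x)) / (cutP L c s x + ε * cutP L c s x ^ 2) ^ 2)
      (cutP L c s x) := by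
    have h3 : HasDerivAt (fun p : ℝ => p + ε * p ^ 2) (1 + ε * (2 * cutP L c s x))
        (cutP L c s x) := by
      have := (hasDerivAt_id (cutP L c s x)).add (((hasDerivAt_pow 2 (cutP L c s x))).const_mul ε)
      have h4 := this.congr_deriv (g' := 1 + ε * (2 * cutP L c s x)) (by norm_num)
      exact h4
    exact h3.inv (by positivity)
  have hc := hφ.comp_hasFDerivAt x hP
  have hev : cut L c s ε =ᶠ[nhds x] ((fun p : ℝ => (p + ε * p ^ 2)⁻¹) ∘ cutP L c s) := by
    filter_upwards [isOpen_laff.mem_nhds hx] with y hy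
    exact if_pos hy
  refine (hc.congr_of_eventuallyEq hev).congr_fderiv ?_
  have hneg : (∑ i, -((laff L c i x)⁻¹ ^ 2) • L i) = -∑ i, ((laff L c i x)⁻¹ ^ 2) • L i := by
    rw [← Finset.sum_neg_distrib]
    exact Finset.sum_congr rfl fun i _ => by ext v; simp
  rw [hneg, smul_neg, ← neg_smul]
  congr 1
  unfold cutm
  field_simp

lemma cut_differentiable (hs : 0 < s) (hε : 0 < ε) : Differentiable ℝ (cut L c s ε) := by
  intro x
  by_cases hx : ∀ i, 0 < laff L c i x
  · exact (cut_hasFDerivAt_in hs hε hx).differentiableAt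
  · exact (cut_hasFDerivAt_out hs hε hx).differentiableAt

lemma cutm_bound (hs : 0 < s) (hε : 0 < ε) {x : Pt} (hx : ∀ i, 0 < laff L c i x) :
    0 ≤ cutm L c s ε x ∧ cutm L c s ε x ≤ 1 := by
  have h2 := cutP_pos hs hx
  unfold cutm
  refine ⟨by positivity, ?_⟩
  rw [div_le_one (by positivity)]
  nlinarith [sq_nonneg (ε * cutP L c s x)]

lemma cut_fderiv_bound (hs : 0 < s) (hε : 0 < ε) (x : Pt) :
    ‖fderiv ℝ (cut L c s ε) x‖ ≤ ∑ i, ‖L i‖ := by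
  by_cases hx : ∀ i, 0 < laff L c i x
  · rw [(cut_hasFDerivAt_in hs hε hx).fderiv, Finset.smul_sum]
    refine (norm_sum_le _ _).trans (Finset.sum_le_sum fun i _ => ?_)
    rw [smul_smul, norm_smul]
    have h2 := cutP_pos hs hx
    obtain ⟨m0, m1⟩ := cutm_bound hs hε hx
    have h3 := cutP_ge_inv hs hx i
    have h4 := hx i
    have : ‖cutm L c s ε x / cutP L c s x ^ 2 * (laff L c i x)⁻¹ ^ 2‖ ≤ 1 := by
      rw [Real.norm_of_nonneg (by positivity)]
      calc _ ≤ 1 / cutP L c s x ^ 2 * cutP L c s x ^ 2 := by gcongr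
        _ = 1 := by field_simp
    calc _ ≤ 1 * ‖L i‖ := by gcongr
      _ = _ := one_mul _
  · rw [(cut_hasFDerivAt_out hs hε hx).fderiv]
    simp only [norm_zero]
    positivity

lemma cut_lower (hs : 0 < s) (hε : 0 < ε) {z : Pt} (hz : ∀ i, laff L c i z = 1 / 3) (x : Pt) :
    (if (∀ i, 0 < laff L c i x) ∧ ∃ i, laff L c i x ≤ s then cutm L c s ε x / 36 else 0) - s ≤
      fderiv ℝ (cut L c s ε) x (z - x) := by
  by_cases hx : ∀ i, 0 < laff L c i x
  · rw [(cut_hasFDerivAt_in hs hε hx).fderiv]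
    obtain ⟨m0, m1⟩ := cutm_bound hs hε hx
    have h2 := cutP_pos hs hx
    have hLz : ∀ i, L i (z - x) = 1 / 3 - laff L c i x := by
      intro i
      have := hz i
      unfold laff at this ⊢
      rw [map_sub]; linarith
    set m := cutm L c s ε x
    set P := cutP L c s x with hP
    have hPge := cutP_ge hs hx
    set a : Fin 3 → ℝ := fun i => (laff L c i x)⁻¹ with ha
    have hapos : ∀ i, 0 < a i := fun i => inv_pos.mpr (hx i)
    have hPa : P = a 0 + a 1 + a 2 + s⁻¹ := by
      rw [hP]; unfold cutP; rw [Fin.sum_univ_three]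
    have hval : ((m / P ^ 2) • ∑ i, ((laff L c i x)⁻¹ ^ 2) • L i : Pt →L[ℝ] ℝ) (z - x) =
        m / P ^ 2 * ((a 0 ^ 2 + a 1 ^ 2 + a 2 ^ 2) / 3 - (a 0 + a 1 + a 2)) := by
      have : ∀ i, a i ^ 2 * laff L c i x = a i := by
        intro i
        have := (hx i).ne'
        simp only [ha]; field_simp
      simp only [Fin.sum_univ_three, _root_.smul_apply, smul_eq_mul, _root_.add_apply, hLz]
      congr 1
      have t0 := this 0
      have t1 := this 1
      have t2 := this 2
      simp only [ha] at t0 t1 t2 ⊢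
      linarith
    rw [hval]
    set p := a 0 + a 1 + a 2 with hp
    have hp0 : 0 < p := by have := hapos 0; have := hapos 1; have := hapos 2; positivity
    have hQ : p ^ 2 / 9 ≤ (a 0 ^ 2 + a 1 ^ 2 + a 2 ^ 2) / 3 := by
      rw [hp]
      nlinarith [sq_nonneg (a 0 - a 1), sq_nonneg (a 1 - a 2), sq_nonneg (a 0 - a 2)]
    have hpP : p ≤ P := by rw [hPa]; have := inv_pos.mpr hs; linarith
    have hk : m / P ^ 2 * (p ^ 2 / 9 - p) ≤
        m / P ^ 2 * ((a 0 ^ 2 + a 1 ^ 2 + a 2 ^ 2) / 3 - p) := by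
      gcongr
    refine le_trans ?_ hk
    have hb : m / P ^ 2 * p ≤ s := by
      have : P⁻¹ ≤ s := by rw [inv_le_comm₀ h2 hs]; exact hPge
      calc m / P ^ 2 * p ≤ 1 / P ^ 2 * P := by gcongr
        _ = P⁻¹ := by field_simp
        _ ≤ s := this
    have hmain : (if (∀ i, 0 < laff L c i x) ∧ ∃ i, laff L c i x ≤ s then m / 36 else 0) ≤
        m / P ^ 2 * (p ^ 2 / 9) := by
      split_ifs with hcase
      · obtain ⟨_, i, hi⟩ := hcase
        have h5 : s⁻¹ ≤ a i := by
          simp only [ha]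
          exact inv_anti₀ (hx i) hi
        have h6 : a i ≤ p := by
          have := hapos 0; have := hapos 1; have := hapos 2
          rw [hp]; fin_cases i <;> simp <;> linarith
        have h7 : P ≤ 2 * p := by rw [hPa]; linarith
        have h8 : P ^ 2 ≤ 4 * p ^ 2 := by nlinarith
        calc m / 36 = m / P ^ 2 * (P ^ 2 / 36) := by field_simp
          _ ≤ m / P ^ 2 * (p ^ 2 / 9) := by
            apply mul_le_mul_of_nonneg_left _ (by positivity)
            linarith
      · positivity
    rw [mul_sub]
    linarith
  · rw [(cut_hasFDerivAt_out hs hε hx).fderiv, if_neg (fun h => hx h.1)]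
    simp [hs.le]

end Cut

/-! ### Edges and their pairing -/

namespace Tri

lemma core_side (t t' : Tri) (h : t.Nondeg) (h' : t'.Nondeg) (hA : t'.A = t.A) (hB : t'.B = t.B)
    (hs : 0 < t.cross / t'.cross) (hdis : t.openHull ∩ t'.openHull = ∅) : False := by
  have hc : Continuous (fun y : ℝ => t.par (y, (1 - y) / 2)) := by
    have := t.continuous_par
    fun_prop
  have hb : Continuous (fun y : ℝ => t'.lamB (t.par (y, (1 - y) / 2))) := t'.continuous_lamB.comp hc
  have hbc : Continuous (fun y : ℝ => t'.lamB (t.par (y, (1 - y) / 2)) +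
      t'.lamC (t.par (y, (1 - y) / 2))) := hb.add (t'.continuous_lamC.comp hc)
  have e : t.par (0, (1 - 0) / 2) = t'.par (0, 1 / 2) := by
    unfold par; rw [hA, hB]; simp
  have b0 : t'.lamB (t.par (0, (1 - 0) / 2)) = 1 / 2 := by rw [e, t'.lamB_par h']
  have c0 : t'.lamC (t.par (0, (1 - 0) / 2)) = 0 := by rw [e, t'.lamC_par h']
  have ev1 : ∀ᶠ y in nhds (0:ℝ), 0 < t'.lamB (t.par (y, (1 - y) / 2)) :=
    hb.continuousAt.eventually (lt_mem_nhds (by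
      show 0 < t'.lamB (t.par (0, (1 - 0) / 2)); rw [b0]; norm_num))
  have ev2 : ∀ᶠ y in nhds (0:ℝ), t'.lamB (t.par (y, (1 - y) / 2)) +
      t'.lamC (t.par (y, (1 - y) / 2)) < 1 :=
    hbc.continuousAt.eventually (gt_mem_nhds (by
      show t'.lamB (t.par (0, (1 - 0) / 2)) + t'.lamC (t.par (0, (1 - 0) / 2)) < 1
      rw [b0, c0]; norm_num))
  have ev3 : ∀ᶠ y in nhds (0:ℝ), y < 1 := gt_mem_nhds (by norm_num)
  have hev := ((ev1.and (ev2.and ev3)).filter_mono (nhdsWithin_le_nhds (s := Ioi 0))).and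
    self_mem_nhdsWithin
  obtain ⟨y, ⟨h1, h2, h3⟩, h4⟩ := hev.exists
  have h4 : 0 < y := h4
  have hm : t.par (y, (1 - y) / 2) ∈ t.openHull := by
    rw [t.par_mem_openHull h]
    exact ⟨h4, by simp; linarith, by simp; linarith⟩
  have hC : t'.lamC (t.par (y, (1 - y) / 2)) = y * (t.cross / t'.cross) := by
    unfold Nondeg at h'
    unfold lamC par
    rw [hA, hB]
    field_simp
    simp [cross]
    ring
  have hm' : t.par (y, (1 - y) / 2) ∈ t'.openHull := by
    rw [t'.openHull_eq h']
    exact ⟨h1, by rw [hC]; positivity, h2⟩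
  have : t.par (y, (1 - y) / 2) ∈ t.openHull ∩ t'.openHull := ⟨hm, hm'⟩
  rw [hdis] at this
  exact this

/-- the edges, indexed by `Fin 3` -/
def ev (t : Tri) (i : Fin 3) : Pt × Pt := ![(t.A, t.B), (t.B, t.C), (t.C, t.A)] i

/-- rotate so that edge `i` becomes `AB` -/
def rt (t : Tri) (i : Fin 3) : Tri := ![t, t.rot, t.rot.rot] i

lemma ev_eq (t : Tri) (i : Fin 3) : t.ev i = ((t.rt i).A, (t.rt i).B) := by
  fin_cases i <;> rfl

lemma rt_cross (t : Tri) (i : Fin 3) : (t.rt i).cross = t.cross := by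
  fin_cases i <;> simp [rt, rot_cross]

lemma rt_closedHull (t : Tri) (i : Fin 3) : (t.rt i).closedHull = t.closedHull := by
  fin_cases i <;> simp [rt, rot_closedHull]

lemma rt_openHull (t : Tri) (i : Fin 3) : (t.rt i).openHull = t.openHull := by
  unfold openHull; rw [rt_closedHull]

lemma rt_nondeg {t : Tri} (h : t.Nondeg) (i : Fin 3) : (t.rt i).Nondeg := by
  unfold Nondeg; rw [rt_cross]; exact h

lemma AB_ne {t : Tri} (h : t.Nondeg) : t.A ≠ t.B := by
  intro e; apply h; simp [cross, e]

lemma ev_ne {t : Tri} (h : t.Nondeg) (i : Fin 3) : (t.ev i).1 ≠ (t.ev i).2 := by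
  rw [ev_eq]; exact AB_ne (rt_nondeg h i)

lemma ev_fst_mem (t : Tri) (i : Fin 3) : (t.ev i).1 ∈ t.closedHull := by
  rw [ev_eq, ← t.rt_closedHull i]; exact A_mem _

lemma ev_snd_mem (t : Tri) (i : Fin 3) : (t.ev i).2 ∈ t.closedHull := by
  rw [ev_eq, ← t.rt_closedHull i]; exact B_mem _

lemma mem_edgeList (t : Tri) (e : Pt × Pt) : e ∈ t.edgeList ↔ ∃ i, t.ev i = e := by
  simp only [edgeList, ev, List.mem_cons, List.not_mem_nil, or_false]
  constructor
  · rintro (rfl | rfl | rfl)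
    · exact ⟨0, rfl⟩
    · exact ⟨1, rfl⟩
    · exact ⟨2, rfl⟩
  · rintro ⟨i, rfl⟩
    fin_cases i <;> simp

lemma sum_edgeList (t : Tri) (f : Pt × Pt → ℝ) : (t.edgeList.map f).sum = ∑ i, f (t.ev i) := by
  rw [Fin.sum_univ_three]
  simp [edgeList, ev]; ring

lemma sg_eq_of_pos {t t' : Tri} (h : t.Nondeg) (h' : t'.Nondeg) (hs : 0 < t.cross / t'.cross) :
    t.sg = t'.sg := by
  unfold sg
  rcases lt_or_gt_of_ne h with hn | hp
  · have : t'.cross < 0 := by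
      by_contra hcon
      push Not at hcon
      exact absurd hs (not_lt.mpr (div_nonpos_of_nonpos_of_nonneg hn.le hcon))
    rw [abs_of_neg hn, abs_of_neg this, neg_div, neg_div, div_self h, div_self h']
  · have : 0 < t'.cross := by
      by_contra hcon
      push Not at hcon
      exact absurd hs (not_lt.mpr (div_nonpos_of_nonneg_of_nonpos hp.le hcon))
    rw [abs_of_pos hp, abs_of_pos this, div_self h, div_self h']

lemma sg_eq_of_neg {t t' : Tri} (h : t.Nondeg) (h' : t'.Nondeg) (hs : t.cross / t'.cross < 0) :
    t.sg = - t'.sg := by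
  unfold sg
  rcases lt_or_gt_of_ne h with hn | hp
  · have : 0 < t'.cross := by
      by_contra hcon
      push Not at hcon
      exact absurd hs (not_lt.mpr (div_nonneg_of_nonpos hn.le hcon))
    rw [abs_of_neg hn, abs_of_pos this, neg_div, div_self h, div_self h']
  · have : t'.cross < 0 := by
      by_contra hcon
      push Not at hcon
      exact absurd hs (not_lt.mpr (div_nonneg hp.le hcon))
    rw [abs_of_pos hp, abs_of_neg this, neg_div, div_self h, div_self h', neg_neg]

lemma sg_ne {t : Tri} (h : t.Nondeg) : t.sg ≠ 0 := div_ne_zero (abs_ne_zero.mpr h) h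

lemma sg_abs {t : Tri} (h : t.Nondeg) : |t.sg| = 1 := by
  unfold sg
  rw [abs_div, abs_abs, div_self (abs_ne_zero.mpr h)]

/-- normals are opposite -/
lemma normal_opp {t t' : Tri} (h : t.Nondeg) (h' : t'.Nondeg)
    (hdis : t.openHull ∩ t'.openHull = ∅) {i j : Fin 3} (hsame : SameEdge (t.ev i) (t'.ev j)) :
    t'.sg • ((t'.ev j).2 - (t'.ev j).1) = -(t.sg • ((t.ev i).2 - (t.ev i).1)) := by
  have hr := rt_nondeg h i
  have hr' := rt_nondeg h' j
  have hdis' : (t.rt i).openHull ∩ (t'.rt j).openHull = ∅ := by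
    rw [rt_openHull, rt_openHull]; exact hdis
  have hne : t.cross / t'.cross ≠ 0 := div_ne_zero h h'
  rcases hsame with he | he
  · rw [he]
    rw [ev_eq, ev_eq, Prod.mk.injEq] at he
    have hneg : t.cross / t'.cross < 0 := by
      by_contra hcon
      push Not at hcon
      refine core_side _ _ hr hr' he.1 he.2 ?_ hdis'
      rw [rt_cross, rt_cross]
      exact lt_of_le_of_ne hcon hne.symm
    rw [sg_eq_of_neg h h' hneg]
    simp
  · have hpos : 0 < t.cross / t'.cross := by
      by_contra hcon
      push Not at hcon
      rw [ev_eq, ev_eq, Prod.mk.injEq] at he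
      let r : Tri := ⟨(t'.rt j).B, (t'.rt j).A, (t'.rt j).C⟩
      have hcr : r.cross = - t'.cross := by
        rw [← rt_cross t' j]; simp [r, cross]; ring
      have hrn : r.Nondeg := by unfold Nondeg; rw [hcr]; exact neg_ne_zero.mpr h'
      have hcl : r.closedHull = (t'.rt j).closedHull := by
        simp only [closedHull, r]
        congr 1
        ext x
        simp; tauto
      refine core_side (t.rt i) r hr hrn he.2 he.1 ?_ ?_
      · rw [rt_cross, hcr, div_neg]
        have := lt_of_le_of_ne hcon hne
        linarith
      · unfold openHull at hdis' ⊢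
        rw [hcl]; exact hdis'
    rw [he, sg_eq_of_pos h h' hpos]
    simp only
    module

lemma SameEdge.symm' {e e' : Pt × Pt} (h : SameEdge e e') : SameEdge e' e := by
  rcases h with rfl | rfl
  · exact Or.inl rfl
  · exact Or.inr rfl

lemma SameEdge.trans' {e e' e'' : Pt × Pt} (h : SameEdge e e') (h' : SameEdge e' e'') :
    SameEdge e e'' := by
  rcases h with rfl | rfl <;> rcases h' with rfl | rfl
  · exact Or.inl rfl
  · exact Or.inr rfl
  · exact Or.inr rfl
  · exact Or.inl rfl

lemma ev_inj {t : Tri} (h : t.Nondeg) {j k : Fin 3} (hs : SameEdge (t.ev j) (t.ev k)) : j = k := by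
  have h1 : t.A ≠ t.B := ev_ne h 0
  have h2 : t.B ≠ t.C := ev_ne h 1
  have h3 : t.C ≠ t.A := ev_ne h 2
  have h1' := h1.symm
  have h2' := h2.symm
  have h3' := h3.symm
  fin_cases j <;> fin_cases k <;> simp_all [SameEdge, ev]

end Tri

open Tri

namespace Triangulation

variable {Ω : Set Pt}

/-- `q` is the partner of `p` -/
def Partner (p q : Tri × Fin 3) : Prop := q.1 ≠ p.1 ∧ SameEdge (p.1.ev p.2) (q.1.ev q.2)

lemma Partner.symm' {p q : Tri × Fin 3} (h : Partner p q) : Partner q p :=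
  ⟨h.1.symm, Tri.SameEdge.symm' h.2⟩

lemma partner_unique (T : Triangulation Ω) {p q r : Tri × Fin 3} (hp : p.1 ∈ T.tris)
    (hq : q.1 ∈ T.tris) (hr : r.1 ∈ T.tris) (h1 : Partner p q) (h2 : Partner p r) : q = r := by
  have hs : SameEdge (q.1.ev q.2) (r.1.ev r.2) :=
    Tri.SameEdge.trans' (Tri.SameEdge.symm' h1.2) h2.2
  have e : q.1 = r.1 := by
    by_contra hne
    have n1 := normal_opp (T.nondeg _ hp) (T.nondeg _ hq)
      (T.disj _ hp _ hq h1.1.symm) h1.2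
    have n2 := normal_opp (T.nondeg _ hp) (T.nondeg _ hr)
      (T.disj _ hp _ hr h2.1.symm) h2.2
    have n3 := normal_opp (T.nondeg _ hq) (T.nondeg _ hr) (T.disj _ hq _ hr hne) hs
    rw [n1, ← n2] at n3
    have n4 : r.1.sg • ((r.1.ev r.2).2 - (r.1.ev r.2).1) = 0 := by
      ext k
      have := congrArg (fun x : Pt => x k) n3
      simp only [PiLp.neg_apply, PiLp.zero_apply] at this ⊢
      linarith
    rcases smul_eq_zero.mp n4 with h | h
    · exact sg_ne (T.nondeg _ hr) h
    · exact ev_ne (T.nondeg _ hr) r.2 (sub_eq_zero.mp h).symm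
  obtain ⟨q1, q2⟩ := q
  obtain ⟨r1, r2⟩ := r
  simp only at e
  subst e
  have h3 : q2 = r2 := ev_inj (T.nondeg _ hq) hs
  rw [h3]

end Triangulation

/-! ### The jump bound -/

namespace Tri

lemma dd_smul (a : ℝ) (v w : Pt) : dd v (a • w) = a * dd v w := by
  simp [dd]; ring

lemma dd_neg (v w : Pt) : dd v (-w) = - dd v w := by
  simp [dd]; ring

lemma dd_le (v w : Pt) : |dd v w| ≤ ‖v‖ * ‖w‖ := by
  apply abs_le_of_sq_le_sq _ (by positivity)
  rw [mul_pow, EuclideanSpace.norm_sq_eq, EuclideanSpace.norm_sq_eq]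
  simp only [Fin.sum_univ_two, Real.norm_eq_abs, sq_abs, dd]
  nlinarith [sq_nonneg (v 0 * w 0 + v 1 * w 1)]

lemma continuous_dd {f : Pt → Pt} (hf : Continuous f) (w : Pt) :
    Continuous (fun x => dd (f x) w) := by
  unfold dd; fun_prop

lemma seg_same (g : Pt → ℝ) {e e' : Pt × Pt} (h : SameEdge e e') :
    seg g e'.1 e'.2 = seg g e.1 e.2 := by
  rcases h with rfl | rfl
  · rfl
  · exact seg_swap g e.1 e.2

lemma norm_same {e e' : Pt × Pt} (h : SameEdge e e') : ‖e'.2 - e'.1‖ = ‖e.2 - e.1‖ := by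
  rcases h with rfl | rfl
  · rfl
  · exact norm_sub_rev _ _

lemma mem_same {e e' : Pt × Pt} (h : SameEdge e e') {s : Set Pt} (h1 : e'.1 ∈ s) (h2 : e'.2 ∈ s) :
    e.1 ∈ s ∧ e.2 ∈ s := by
  rcases h with rfl | rfl
  · exact ⟨h1, h2⟩
  · exact ⟨h2, h1⟩

lemma seg_nonneg {g : Pt → ℝ} (hg : ∀ x, 0 ≤ g x) (p q : Pt) : 0 ≤ seg g p q :=
  intervalIntegral.integral_nonneg zero_le_one fun _ _ => hg _

lemma seg_smul (a : ℝ) (g : Pt → ℝ) (p q : Pt) : seg (fun x => a * g x) p q = a * seg g p q :=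
  intervalIntegral.integral_const_mul _ _

end Tri

open Tri

namespace Triangulation

variable {Ω : Set Pt}

/-- edge contribution -/
def edgeI (u : Tri → Pt → ℝ) (f : Pt → Pt) (p : Tri × Fin 3) : ℝ :=
  p.1.sg * seg (fun x => (u p.1 x) ^ 2 * dd (f x) ((p.1.ev p.2).2 - (p.1.ev p.2).1))
    (p.1.ev p.2).1 (p.1.ev p.2).2

/-- scaled trace contribution -/
def edgeS (u : Tri → Pt → ℝ) (p : Tri × Fin 3) : ℝ :=
  ‖(p.1.ev p.2).2 - (p.1.ev p.2).1‖ ^ 2 *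
    seg (fun x => (u p.1 x) ^ 2) (p.1.ev p.2).1 (p.1.ev p.2).2

lemma edgeS_nonneg (u : Tri → Pt → ℝ) (p : Tri × Fin 3) : 0 ≤ edgeS u p :=
  mul_nonneg (sq_nonneg _) (seg_nonneg (fun _ => sq_nonneg _) _ _)

/-- jump over an edge -/
def edgeJ (u : Tri → Pt → ℝ) (p : Tri × Fin 3) (t : Tri) : ℝ :=
  seg (fun x => (u p.1 x - u t x) ^ 2) (p.1.ev p.2).1 (p.1.ev p.2).2

lemma edgeJ_nonneg (u : Tri → Pt → ℝ) (p : Tri × Fin 3) (t : Tri) : 0 ≤ edgeJ u p t :=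
  seg_nonneg (fun _ => sq_nonneg _) _ _

lemma one_d (α β d : ℝ → ℝ) (ha : ContinuousOn α (uIcc 0 1)) (hb : ContinuousOn β (uIcc 0 1))
    (hd : ContinuousOn d (uIcc 0 1)) (σ Bd n : ℝ) (hs : |σ| = 1) (hBd : 0 ≤ Bd)
    (hdn : ∀ s, |d s| ≤ Bd * n) :
    σ * (∫ s in (0:ℝ)..1, α s ^ 2 * d s) + -(σ * ∫ s in (0:ℝ)..1, β s ^ 2 * d s) ≤
      Bd * ((1/2) * (∫ s in (0:ℝ)..1, (α s - β s) ^ 2) + n ^ 2 * (∫ s in (0:ℝ)..1, α s ^ 2) +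
        n ^ 2 * ∫ s in (0:ℝ)..1, β s ^ 2) := by
  have i1 : IntervalIntegrable (fun s => α s ^ 2 * d s) volume 0 1 :=
    ((ha.pow 2).mul hd).intervalIntegrable
  have i2 : IntervalIntegrable (fun s => β s ^ 2 * d s) volume 0 1 :=
    ((hb.pow 2).mul hd).intervalIntegrable
  have i3 : IntervalIntegrable (fun s => (α s - β s) ^ 2) volume 0 1 :=
    ((ha.sub hb).pow 2).intervalIntegrable
  have i4 : IntervalIntegrable (fun s => α s ^ 2) volume 0 1 := (ha.pow 2).intervalIntegrable
  have i5 : IntervalIntegrable (fun s => β s ^ 2) volume 0 1 := (hb.pow 2).intervalIntegrable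
  have hm : ∫ s in (0:ℝ)..1, σ * (α s ^ 2 * d s - β s ^ 2 * d s) ≤
      ∫ s in (0:ℝ)..1, Bd * ((1/2) * (α s - β s) ^ 2 + n ^ 2 * α s ^ 2 + n ^ 2 * β s ^ 2) := by
    apply intervalIntegral.integral_mono_on zero_le_one
    · exact (i1.sub i2).const_mul _
    · exact (((i3.const_mul _).add (i4.const_mul _)).add (i5.const_mul _)).const_mul _
    · intro s _
      have h1 := hdn s
      generalize α s = α at *
      generalize β s = β at *
      generalize d s = d at *
      calc σ * (α ^ 2 * d - β ^ 2 * d) = σ * d * ((α - β) * (α + β)) := by ring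
        _ ≤ |σ * d * ((α - β) * (α + β))| := le_abs_self _
        _ = |d| * |(α - β) * (α + β)| := by rw [abs_mul, abs_mul, hs, one_mul]
        _ ≤ (Bd * n) * |(α - β) * (α + β)| := by
            apply mul_le_mul_of_nonneg_right h1 (abs_nonneg _)
        _ = Bd * (|α - β| * (n * |α + β|)) := by rw [abs_mul]; ring
        _ ≤ Bd * (1 / 2 * (α - β) ^ 2 + n ^ 2 * α ^ 2 + n ^ 2 * β ^ 2) := by
            apply mul_le_mul_of_nonneg_left _ hBd
            have := sq_nonneg (|α - β| - n * |α + β|)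
            have h3 := sq_abs (α - β)
            have h4 := sq_abs (α + β)
            have h5 : 0 ≤ n ^ 2 * (α - β) ^ 2 := by positivity
            have h6 : (n * |α + β|) ^ 2 = n ^ 2 * (α + β) ^ 2 := by rw [mul_pow, h4]
            nlinarith
  rw [intervalIntegral.integral_const_mul, intervalIntegral.integral_const_mul,
    intervalIntegral.integral_sub i1 i2,
    intervalIntegral.integral_add ((i3.const_mul _).add (i4.const_mul _)) (i5.const_mul _),
    intervalIntegral.integral_add (i3.const_mul _) (i4.const_mul _),
    intervalIntegral.integral_const_mul, intervalIntegral.integral_const_mul,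
    intervalIntegral.integral_const_mul] at hm
  linarith

lemma pair_bound (T : Triangulation Ω) (u : Tri → Pt → ℝ)
    (hu : ∀ t ∈ T.tris, ContinuousOn (u t) t.closedHull) (f : Pt → Pt) (hf : Continuous f)
    (Bd : ℝ) (hB : ∀ x, ‖f x‖ ≤ Bd) {p q : Tri × Fin 3} (hp : p.1 ∈ T.tris) (hq : q.1 ∈ T.tris)
    (hpq : Partner p q) :
    edgeI u f p + edgeI u f q ≤ Bd * ((1/2) * edgeJ u p q.1 + edgeS u p + edgeS u q) := by
  have hn := normal_opp (T.nondeg _ hp) (T.nondeg _ hq) (T.disj _ hp _ hq hpq.1.symm) hpq.2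
  have hs := sg_abs (T.nondeg _ hp)
  obtain ⟨hm3, hm4⟩ := mem_same hpq.2 (q.1.ev_fst_mem q.2) (q.1.ev_snd_mem q.2)
  have hBd : 0 ≤ Bd := (norm_nonneg _).trans (hB 0)
  have e : edgeI u f q = -(p.1.sg * seg (fun x => (u q.1 x) ^ 2 *
      dd (f x) ((p.1.ev p.2).2 - (p.1.ev p.2).1)) (p.1.ev p.2).1 (p.1.ev p.2).2) := by
    unfold edgeI
    rw [seg_same _ hpq.2, ← neg_mul, ← seg_smul, ← seg_smul]
    congr 1
    funext x
    have := congrArg (dd (f x)) hn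
    rw [dd_neg, dd_smul, dd_smul] at this
    linear_combination (u q.1 x) ^ 2 * this
  rw [e]
  unfold edgeI edgeS edgeJ
  rw [seg_same _ hpq.2, norm_same hpq.2]
  have hd := continuous_dd hf ((p.1.ev p.2).2 - (p.1.ev p.2).1)
  refine one_d _ _ _ (p.1.path_cont (hu _ hp) (p.1.ev_fst_mem p.2) (p.1.ev_snd_mem p.2))
    (q.1.path_cont (hu _ hq) hm3 hm4) ?_ _ _ _ hs hBd ?_
  · exact (hd.comp (by fun_prop : Continuous fun s : ℝ =>
      (p.1.ev p.2).1 + s • ((p.1.ev p.2).2 - (p.1.ev p.2).1))).continuousOn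
  · intro s
    exact (dd_le _ _).trans (mul_le_mul_of_nonneg_right (hB _) (norm_nonneg _))

lemma two_jumpSq (T : Triangulation Ω) (u : Tri → Pt → ℝ) :
    2 * T.jumpSq u = ∑ p ∈ T.tris ×ˢ (Finset.univ : Finset (Fin 3)), ∑ t ∈ T.tris,
      if p.1 ≠ t ∧ ∃ e' ∈ t.edgeList, SameEdge (p.1.ev p.2) e' then edgeJ u p t else 0 := by
  unfold jumpSq
  rw [Finset.sum_product, ← mul_assoc]
  norm_num
  apply Finset.sum_congr rfl
  intro t ht
  rw [Finset.sum_comm]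
  apply Finset.sum_congr rfl
  intro t' _
  by_cases h : t = t'
  · simp [h]
  · simp only [h, if_false, not_false_eq_true, true_and]
    unfold edgeJump
    rw [sum_edgeList]
    apply Finset.sum_congr rfl
    intro i _
    have hne : dist (t.ev i).1 (t.ev i).2 ≠ 0 := dist_ne_zero.mpr (ev_ne (T.nondeg _ ht) i)
    unfold segInt edgeJ seg
    rw [inv_mul_cancel_left₀ hne]
    simp

lemma jumpSq_nonneg (T : Triangulation Ω) (u : Tri → Pt → ℝ) : 0 ≤ T.jumpSq u := by
  have := T.two_jumpSq u
  have h : 0 ≤ 2 * T.jumpSq u := by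
    rw [this]
    apply Finset.sum_nonneg; intro p _
    apply Finset.sum_nonneg; intro t _
    split_ifs
    · exact edgeJ_nonneg _ _ _
    · exact le_rfl
  linarith

lemma pairing (T : Triangulation Ω) (u : Tri → Pt → ℝ)
    (hu : ∀ t ∈ T.tris, ContinuousOn (u t) t.closedHull) (f : Pt → Pt) (hf : Continuous f)
    (Bd : ℝ) (hB : ∀ x, ‖f x‖ ≤ Bd) (hf0 : ∀ x ∈ frontier Ω, f x = 0) :
    ∑ p ∈ T.tris ×ˢ (Finset.univ : Finset (Fin 3)), edgeI u f p ≤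
      Bd * (T.jumpSq u + ∑ p ∈ T.tris ×ˢ (Finset.univ : Finset (Fin 3)), edgeS u p) := by
  have hBd : 0 ≤ Bd := (norm_nonneg _).trans (hB 0)
  set E := T.tris ×ˢ (Finset.univ : Finset (Fin 3)) with hE
  have mE : ∀ p, p ∈ E ↔ p.1 ∈ T.tris := by intro p; simp [hE]
  set E' := E.filter (fun p => ∃ q ∈ E, Partner p q) with hE'
  have h0 : ∑ p ∈ E, edgeI u f p = ∑ p ∈ E', edgeI u f p := by
    symm
    apply Finset.sum_subset (Finset.filter_subset _ _)
    intro p hp hp'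
    have hpt := (mE p).mp hp
    rcases T.conforming p.1 hpt (p.1.ev p.2) ((p.1.mem_edgeList _).mpr ⟨p.2, rfl⟩) with h | h
    · unfold edgeI seg
      rw [intervalIntegral.integral_congr (g := fun _ => (0:ℝ))]
      · simp
      · intro s hs
        rw [uIcc_of_le zero_le_one] at hs
        have : (p.1.ev p.2).1 + s • ((p.1.ev p.2).2 - (p.1.ev p.2).1) ∈ frontier Ω := by
          apply h
          rw [segment_eq_image']
          exact ⟨s, hs, rfl⟩
        simp only [hf0 _ this]
        simp [dd]
    · exfalso
      obtain ⟨t', ht', hne, e', he', hs⟩ := h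
      obtain ⟨j, rfl⟩ := (t'.mem_edgeList _).mp he'
      apply hp'
      refine Finset.mem_filter.mpr ?_
      exact ⟨hp, (t', j), (mE _).mpr ht', hne, hs⟩
  have hch : ∀ p, ∃ q, p ∈ E' → q ∈ E ∧ Partner p q := by
    intro p
    by_cases hp : p ∈ E'
    · obtain ⟨q, hq⟩ := (Finset.mem_filter.mp hp).2
      exact ⟨q, fun _ => hq⟩
    · exact ⟨p, fun h => absurd h hp⟩
  choose σ hσ using hch
  have hEt : ∀ p ∈ E', p ∈ E := fun p hp => (Finset.mem_filter.mp hp).1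
  have hσE : ∀ p ∈ E', σ p ∈ E' := by
    intro p hp
    rw [hE', Finset.mem_filter]
    exact ⟨(hσ p hp).1, p, hEt p hp, (hσ p hp).2.symm'⟩
  have hσσ : ∀ p ∈ E', σ (σ p) = p := by
    intro p hp
    have h1 := hσ _ (hσE p hp)
    exact T.partner_unique ((mE _).mp (hσ p hp).1) ((mE _).mp h1.1) ((mE _).mp (hEt p hp)) h1.2
      (hσ p hp).2.symm'
  have swap : ∀ F : Tri × Fin 3 → ℝ, ∑ p ∈ E', F (σ p) = ∑ p ∈ E', F p := fun F =>
    Finset.sum_nbij' σ σ hσE hσE hσσ hσσ (fun _ _ => rfl)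
  have hJ : ∑ p ∈ E', edgeJ u p (σ p).1 ≤ 2 * T.jumpSq u := by
    rw [T.two_jumpSq]
    have hnn : ∀ (p : Tri × Fin 3) (t : Tri), 0 ≤ if p.1 ≠ t ∧ ∃ e' ∈ t.edgeList, SameEdge (p.1.ev p.2) e' then
        edgeJ u p t else 0 := by
      intro p t
      split_ifs
      · exact edgeJ_nonneg _ _ _
      · exact le_rfl
    refine le_trans (Finset.sum_le_sum ?_) (Finset.sum_le_sum_of_subset_of_nonneg
      (Finset.filter_subset _ _) (fun p _ _ => Finset.sum_nonneg fun t _ => hnn p t))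
    intro p hp
    refine le_trans (le_of_eq ?_) (Finset.single_le_sum (fun t _ => hnn p t) ((mE _).mp (hσ p hp).1))
    rw [if_pos]
    exact ⟨(hσ p hp).2.1.symm, _, ((σ p).1.mem_edgeList _).mpr ⟨(σ p).2, rfl⟩, (hσ p hp).2.2⟩
  have hS : ∑ p ∈ E', edgeS u p ≤ ∑ p ∈ E, edgeS u p :=
    Finset.sum_le_sum_of_subset_of_nonneg (Finset.filter_subset _ _) fun p _ _ => edgeS_nonneg u p
  have hsum : ∑ p ∈ E', (edgeI u f p + edgeI u f (σ p)) ≤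
      ∑ p ∈ E', Bd * ((1/2) * edgeJ u p (σ p).1 + edgeS u p + edgeS u (σ p)) := by
    apply Finset.sum_le_sum
    intro p hp
    exact T.pair_bound u hu f hf Bd hB ((mE _).mp (hEt p hp)) ((mE _).mp (hσ p hp).1) (hσ p hp).2
  rw [Finset.sum_add_distrib, swap, ← Finset.mul_sum, Finset.sum_add_distrib,
    Finset.sum_add_distrib, swap, ← Finset.mul_sum] at hsum
  rw [h0]
  have h3 := T.jumpSq_nonneg u
  have : Bd * (1 / 2 * ∑ p ∈ E', edgeJ u p (σ p).1 + ∑ p ∈ E', edgeS u p + ∑ p ∈ E', edgeS u p)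
      ≤ Bd * (2 * (T.jumpSq u + ∑ p ∈ E, edgeS u p)) := by
    apply mul_le_mul_of_nonneg_left _ hBd
    linarith
  linarith

end Triangulation

/-! ### Shape regularity and traces -/

namespace Tri

lemma cross_dd (t : Tri) : t.cross = dd (t.B - t.A) (t.C - t.A) := by
  simp [cross, dd]

lemma cross_le (t : Tri) : |t.cross| ≤ ‖t.B - t.A‖ * ‖t.C - t.A‖ := by
  rw [cross_dd]; exact dd_le _ _

lemma shape_edges (t : Tri) (h : t.Nondeg) {K : ℝ} (hK : t.shapeReg ≤ K) (i : Fin 3) :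
    ‖(t.ev i).2 - (t.ev i).1‖ ^ 2 ≤ 2 * K * |t.cross| := by
  have hX : 0 < |t.cross| := abs_pos.mpr h
  have c1 := t.cross_le
  have c2 := t.rot.cross_le
  have c3 := t.rot.rot.cross_le
  rw [rot_cross] at c2
  rw [rot_cross, rot_cross] at c3
  simp only [rot] at c2 c3
  unfold shapeReg circumradius inradius area la lb lc at hK
  simp only [dist_eq_norm] at hK
  rw [norm_sub_rev t.A t.B, norm_sub_rev t.B t.C] at hK
  rw [norm_sub_rev t.A t.C] at hK
  rw [norm_sub_rev t.A t.B] at c2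
  rw [norm_sub_rev t.A t.C, norm_sub_rev t.B t.C] at c3
  have ha : 0 < ‖t.C - t.B‖ := norm_pos_iff.mpr (sub_ne_zero.mpr (ev_ne h 1).symm)
  have hb : 0 < ‖t.C - t.A‖ := norm_pos_iff.mpr (sub_ne_zero.mpr (ev_ne h 2))
  have hc : 0 < ‖t.B - t.A‖ := norm_pos_iff.mpr (sub_ne_zero.mpr (ev_ne h 0).symm)
  have e0 : ‖(t.ev 0).2 - (t.ev 0).1‖ = ‖t.B - t.A‖ := rfl
  have e1 : ‖(t.ev 1).2 - (t.ev 1).1‖ = ‖t.C - t.B‖ := rfl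
  have e2 : ‖(t.ev 2).2 - (t.ev 2).1‖ = ‖t.C - t.A‖ := norm_sub_rev t.A t.C
  have key : ‖(t.ev i).2 - (t.ev i).1‖ = ‖t.B - t.A‖ ∨ ‖(t.ev i).2 - (t.ev i).1‖ = ‖t.C - t.B‖ ∨
      ‖(t.ev i).2 - (t.ev i).1‖ = ‖t.C - t.A‖ := by
    fin_cases i
    · exact Or.inl e0
    · exact Or.inr (Or.inl e1)
    · exact Or.inr (Or.inr e2)
  generalize ‖(t.ev i).2 - (t.ev i).1‖ = n at *
  clear e0 e1 e2
  generalize |t.cross| = X at *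
  generalize ‖t.C - t.B‖ = a at *
  generalize ‖t.C - t.A‖ = b at *
  generalize ‖t.B - t.A‖ = c at *
  have h1 : a * b * c / (4 * (X / 2)) / (2 * (X / 2) / (a + b + c)) =
      (a * b * c * (a + b + c)) / (2 * X ^ 2) := by
    field_simp
    ring
  rw [h1, div_le_iff₀ (by positivity)] at hK
  have goal : ∀ m x y : ℝ, 0 < m → 0 < x → 0 < y → X ≤ x * y →
      m * (x * y) * (m + (x + y)) ≤ K * (2 * X ^ 2) → m ^ 2 ≤ 2 * K * X := by
    intro m x y hm hx hy hXX hle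
    have : m ^ 2 * X ≤ 2 * K * X * X := by
      calc m ^ 2 * X ≤ m ^ 2 * (x * y) := by gcongr
        _ ≤ m * (x * y) * (m + (x + y)) := by
            have : 0 ≤ m * (x * y) * (x + y) := by positivity
            nlinarith
        _ ≤ _ := by linarith
    exact le_of_mul_le_mul_right this hX
  rcases key with rfl | rfl | rfl
  · exact goal n a b hc ha hb (by linarith) (by linarith)
  · exact goal n b c ha hb hc (by linarith) (by linarith)
  · exact goal n a c hb ha hc (by linarith) (by linarith)

lemma closedHull_eq_closure (t : Tri) (h : t.Nondeg) : t.closedHull = closure t.openHull := by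
  have hne : (interior t.closedHull).Nonempty := by
    refine ⟨t.par (1/3, 1/3), ?_⟩
    have := (t.par_mem_openHull h (1/3, 1/3)).mpr (by simp [refTri]; norm_num)
    exact this
  unfold openHull
  rw [t.convex_closedHull.closure_interior_eq_closure_of_nonempty_interior hne,
    t.isCompact_closedHull.isClosed.closure_eq]

end Tri

open Tri

namespace Triangulation

variable {Ω : Set Pt}

lemma openHull_sub (T : Triangulation Ω) {t : Tri} (ht : t ∈ T.tris) : t.openHull ⊆ Ω := by
  rw [T.cover]
  apply interior_mono
  exact subset_biUnion_of_mem (u := fun t : Tri => t.closedHull) ht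

lemma hull_diam (T : Triangulation Ω) (hb : Bornology.IsBounded Ω) {t : Tri} (ht : t ∈ T.tris)
    {x y : Pt} (hx : x ∈ t.closedHull) (hy : y ∈ t.closedHull) : ‖x - y‖ ≤ Metric.diam Ω := by
  rw [t.closedHull_eq_closure (T.nondeg _ ht)] at hx hy
  have hs := closure_mono (T.openHull_sub ht)
  rw [← Metric.diam_closure, ← dist_eq_norm]
  exact Metric.dist_le_diam_of_mem hb.closure (hs hx) (hs hy)

lemma edgeS_bound (T : Triangulation Ω) (hb : Bornology.IsBounded Ω) {K : ℝ}
    (hK : T.ShapeRegular K) (u : Tri → Pt → ℝ) (hu : T.PwH1 u) {t : Tri} (ht : t ∈ T.tris)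
    (i : Fin 3) :
    edgeS u (t, i) ≤ 2 * |K| * (3 * (∫ x in t.openHull, (u t x) ^ 2) +
      Metric.diam Ω ^ 2 * ∫ x in t.openHull, ‖fderiv ℝ (u t) x‖ ^ 2) := by
  obtain ⟨hc, hd, h1, h2⟩ := hu t ht
  have hn := T.nondeg _ ht
  have hd' : ∀ x ∈ t.openHull, DifferentiableAt ℝ (u t) x := fun x hx =>
    hd.differentiableAt (isOpen_interior.mem_nhds hx)
  have tr := (t.rt i).trace_AB (rt_nondeg hn i) (u t) (by rw [rt_closedHull]; exact hc)
    (by rw [rt_openHull]; exact hd') (by rw [rt_openHull]; exact h1)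
    (by rw [rt_openHull]; exact h2) (Metric.diam Ω) (by
      intro x hx
      rw [rt_openHull] at hx
      refine T.hull_diam hb ht ?_ (openHull_subset _ hx)
      rw [← t.rt_closedHull i]; exact C_mem _)
  rw [rt_cross, rt_openHull] at tr
  have sh := t.shape_edges hn (hK t ht) i
  have hS : 0 ≤ seg (fun x => (u t x) ^ 2) (t.ev i).1 (t.ev i).2 :=
    seg_nonneg (fun _ => sq_nonneg _) _ _
  have e : seg (fun x => (u t x) ^ 2) (t.ev i).1 (t.ev i).2 =
    seg (fun x => (u t x) ^ 2) (t.rt i).A (t.rt i).B := by rw [ev_eq]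
  rw [← e] at tr
  unfold edgeS
  simp only
  calc _ ≤ 2 * K * |t.cross| * seg (fun x => (u t x) ^ 2) (t.ev i).1 (t.ev i).2 :=
        mul_le_mul_of_nonneg_right sh hS
    _ ≤ 2 * |K| * |t.cross| * seg (fun x => (u t x) ^ 2) (t.ev i).1 (t.ev i).2 := by
        have := le_abs_self K
        gcongr
    _ = 2 * |K| * (|t.cross| * seg (fun x => (u t x) ^ 2) (t.ev i).1 (t.ev i).2) := by ring
    _ ≤ _ := mul_le_mul_of_nonneg_left tr (by positivity)

lemma sum_edgeS (T : Triangulation Ω) (hb : Bornology.IsBounded Ω) {K : ℝ}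
    (hK : T.ShapeRegular K) (u : Tri → Pt → ℝ) (hu : T.PwH1 u) :
    ∑ p ∈ T.tris ×ˢ (Finset.univ : Finset (Fin 3)), edgeS u p ≤
      6 * |K| * (3 * T.sqL2 u + Metric.diam Ω ^ 2 * T.gradSq u) := by
  rw [Finset.sum_product]
  unfold sqL2 gradSq
  rw [Finset.mul_sum, Finset.mul_sum, ← Finset.sum_add_distrib, Finset.mul_sum]
  apply Finset.sum_le_sum
  intro t ht
  have h0 := T.edgeS_bound hb hK u hu ht 0
  have h1 := T.edgeS_bound hb hK u hu ht 1
  have h2 := T.edgeS_bound hb hK u hu ht 2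
  rw [Fin.sum_univ_three]
  linarith

lemma sqL2_nonneg (T : Triangulation Ω) (u : Tri → Pt → ℝ) : 0 ≤ T.sqL2 u :=
  Finset.sum_nonneg fun _ _ => integral_nonneg fun _ => sq_nonneg _

lemma gradSq_nonneg (T : Triangulation Ω) (u : Tri → Pt → ℝ) : 0 ≤ T.gradSq u :=
  Finset.sum_nonneg fun _ _ => integral_nonneg fun _ => sq_nonneg _

lemma jump_edge_bound (T : Triangulation Ω) (hb : Bornology.IsBounded Ω) {K : ℝ}
    (hK : T.ShapeRegular K) (u : Tri → Pt → ℝ) (hu : T.PwH1 u) :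
    T.jumpSq u + ∑ p ∈ T.tris ×ˢ (Finset.univ : Finset (Fin 3)), edgeS u p ≤
      (1 + 6 * |K| * (3 + Metric.diam Ω ^ 2)) * T.normSq u := by
  have h := T.sum_edgeS hb hK u hu
  have a1 := T.sqL2_nonneg u
  have a2 := T.gradSq_nonneg u
  have a3 := T.jumpSq_nonneg u
  unfold normSq
  have d2 : 0 ≤ Metric.diam Ω ^ 2 := sq_nonneg _
  generalize Metric.diam Ω ^ 2 = d at *
  have hk := abs_nonneg K
  have b1 := mul_nonneg hk (mul_nonneg d2 a1)
  have b2 := mul_nonneg hk a2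
  have b3 := mul_nonneg (mul_nonneg hk a3) (add_nonneg d2 (by norm_num : (0:ℝ) ≤ 3))
  nlinarith

end Triangulation

/-! ### The estimate near one triangle -/

open Tri

namespace Triangulation

variable {Ω : Set Pt} {L : Fin 3 → Pt →L[ℝ] ℝ} {c : Fin 3 → ℝ}

/-- inner strip -/
def strip (L : Fin 3 → Pt →L[ℝ] ℝ) (c : Fin 3 → ℝ) (s : ℝ) : Set Pt :=
  {x | (∀ i, 0 < laff L c i x) ∧ ∃ i, laff L c i x ≤ s}

lemma measurableSet_strip (s : ℝ) : MeasurableSet (strip L c s) := by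
  have e : strip L c s = {x | ∀ i, 0 < laff L c i x} ∩ ⋃ i, {x | laff L c i x ≤ s} := by
    ext x; simp [strip]
  rw [e]
  exact isOpen_laff.measurableSet.inter
    (MeasurableSet.iUnion fun i => (isClosed_le (continuous_laff i) continuous_const).measurableSet)

lemma measurable_cutm (s ε : ℝ) : Measurable (cutm L c s ε) := by
  have : ∀ i, Measurable (laff L c i) := fun i => (continuous_laff i).measurable
  unfold cutm cutP
  fun_prop

lemma one_tri (T : Triangulation Ω) (u : Tri → Pt → ℝ) (hu : T.PwH1 u) {s ε D z}
    (hs : 0 < s) (hε : 0 < ε) (hz : ∀ i, laff L c i z = 1 / 3)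
    (hD : ∀ x, (∀ i, 0 < laff L c i x) → ‖z - x‖ ≤ D) (hD0 : 0 ≤ D) {t : Tri} (ht : t ∈ T.tris) :
    ∫ x in t.openHull, (strip L c s).indicator (fun x => cutm L c s ε x / 36 * (u t x) ^ 2) x ≤
      ∑ i, edgeI u (fun x => cut L c s ε x • (z - x)) (t, i) +
      ((3 + D) * s * (∫ x in t.openHull, (u t x) ^ 2) +
        D * s * ∫ x in t.openHull, ‖fderiv ℝ (u t) x‖ ^ 2) := by
  obtain ⟨hc, hd, h1, h2⟩ := hu t ht
  have hn := T.nondeg _ ht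
  have hd' : ∀ x ∈ t.openHull, DifferentiableAt ℝ (u t) x := fun x hx =>
    hd.differentiableAt (isOpen_interior.mem_nhds hx)
  obtain ⟨hG, hGe⟩ := t.int_field hn (fun x => (u t x) ^ 2) (hc.pow 2)
    (fun x hx => (hd' x hx).pow 2) (t.sq_grad_int (u t) hc hd' h1 h2) (cut L c s ε)
    (cut_differentiable hs hε) _ (cut_fderiv_bound hs hε) z
  have hE : ∑ i, edgeI u (fun x => cut L c s ε x • (z - x)) (t, i) =
      ∫ x in t.openHull, (cut L c s ε x * fderiv ℝ (fun x => (u t x) ^ 2) x (z - x) +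
        (u t x) ^ 2 * fderiv ℝ (cut L c s ε) x (z - x) - 2 * ((u t x) ^ 2 * cut L c s ε x)) := by
    rw [hGe, Fin.sum_univ_three]
    have e : ∀ v, (fun x => (u t x) ^ 2 * dd (cut L c s ε x • (z - x)) v) =
        fun x => (u t x) ^ 2 * cut L c s ε x * dd (z - x) v := by
      intro v; funext x; simp [dd]; ring
    simp only [edgeI, e]
    simp [ev]
    ring
  have hR : IntegrableOn (fun x => (3 + D) * s * (u t x) ^ 2 +
      D * s * ‖fderiv ℝ (u t) x‖ ^ 2) t.openHull := (h1.const_mul _).add (h2.const_mul _)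
  rw [hE, ← integral_const_mul, ← integral_const_mul, ← integral_add (h1.const_mul _)
    (h2.const_mul _), ← integral_add hG hR]
  apply integral_mono_of_nonneg
  · filter_upwards with x
    apply indicator_nonneg
    intro x hx
    have := (cutm_bound hs hε hx.1).1
    positivity
  · exact hG.add hR
  · filter_upwards [ae_restrict_mem t.measurableSet_openHull] with x hx
    have lo := cut_lower hs hε hz x
    have c0 := cut_nonneg (L := L) (c := c) hs hε x
    have c1 := cut_le (L := L) (c := c) hs hε x
    have b1 : (strip L c s).indicator (fun x => cutm L c s ε x / 36 * (u t x) ^ 2) x =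
      (u t x) ^ 2 * (if (∀ i, 0 < laff L c i x) ∧ ∃ i, laff L c i x ≤ s then
        cutm L c s ε x / 36 else 0) := by
      by_cases hx' : (∀ i, 0 < laff L c i x) ∧ ∃ i, laff L c i x ≤ s
      · rw [if_pos hx', indicator_of_mem (show x ∈ strip L c s from hx')]; ring
      · rw [if_neg hx', indicator_of_notMem (show x ∉ strip L c s from hx')]; ring
    rw [b1]
    have b2 := mul_le_mul_of_nonneg_left lo (sq_nonneg (u t x))
    have b3 : -(D * s * (u t x ^ 2 + ‖fderiv ℝ (u t) x‖ ^ 2)) ≤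
        cut L c s ε x * fderiv ℝ (fun x => (u t x) ^ 2) x (z - x) := by
      by_cases hW : ∀ i, 0 < laff L c i x
      · apply neg_le_of_abs_le
        rw [fderiv_sq (hd' x hx), abs_mul, abs_of_nonneg c0]
        have k1 : |((2 * u t x) • fderiv ℝ (u t) x) (z - x)| ≤
            (u t x ^ 2 + ‖fderiv ℝ (u t) x‖ ^ 2) * D := by
          have k2 := (fderiv ℝ (u t) x).le_opNorm (z - x)
          have k3 := hD x hW
          have k4 : ((2 * u t x) • fderiv ℝ (u t) x) (z - x) =
            2 * u t x * fderiv ℝ (u t) x (z - x) := rfl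
          rw [k4, abs_mul, abs_mul]
          rw [Real.norm_eq_abs] at k2
          calc |2| * |u t x| * |fderiv ℝ (u t) x (z - x)| ≤
              |2| * |u t x| * (‖fderiv ℝ (u t) x‖ * D) := by
                gcongr
                exact k2.trans (by gcongr)
            _ = (2 * |u t x| * ‖fderiv ℝ (u t) x‖) * D := by
                rw [abs_of_pos (by norm_num : (0:ℝ) < 2)]; ring
            _ ≤ _ := by
                gcongr
                nlinarith [sq_nonneg (|u t x| - ‖fderiv ℝ (u t) x‖), sq_abs (u t x)]
        calc _ ≤ s * ((u t x ^ 2 + ‖fderiv ℝ (u t) x‖ ^ 2) * D) := by gcongr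
          _ = _ := by ring
      · rw [cut_zero hW]
        have : 0 ≤ D * s * (u t x ^ 2 + ‖fderiv ℝ (u t) x‖ ^ 2) := by positivity
        linarith
    have b4 : u t x ^ 2 * cut L c s ε x ≤ u t x ^ 2 * s :=
      mul_le_mul_of_nonneg_left c1 (sq_nonneg _)
    linarith

lemma eps_bound (T : Triangulation Ω) (hΩ : IsOpen Ω) (hb : Bornology.IsBounded Ω) {K : ℝ}
    (hK : T.ShapeRegular K) (u : Tri → Pt → ℝ) (hu : T.PwH1 u) {s ε z}
    (hs : 0 < s) (hε : 0 < ε) (hz : ∀ i, laff L c i z = 1 / 3)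
    (hW : {x | ∀ i, 0 < laff L c i x} ⊆ Ω) :
    ∑ t ∈ T.tris, ∫ x in t.openHull,
        (strip L c s).indicator (fun x => cutm L c s ε x / 36 * (u t x) ^ 2) x ≤
      (Metric.diam Ω * (1 + 6 * |K| * (3 + Metric.diam Ω ^ 2)) + 3 + Metric.diam Ω) * s *
        T.normSq u := by
  set D := Metric.diam Ω with hDd
  have hD0 : 0 ≤ D := Metric.diam_nonneg
  have hzW : z ∈ Ω := hW (by intro i; rw [hz i]; norm_num)
  have hD : ∀ x, (∀ i, 0 < laff L c i x) → ‖z - x‖ ≤ D := by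
    intro x hx
    rw [← dist_eq_norm]
    exact Metric.dist_le_diam_of_mem hb hzW (hW hx)
  have h1 := Finset.sum_le_sum fun t ht => T.one_tri u hu hs hε hz hD hD0 (t := t) ht
  refine h1.trans ?_
  rw [Finset.sum_add_distrib, ← Finset.sum_product', Finset.sum_add_distrib, ← Finset.mul_sum,
    ← Finset.mul_sum]
  have h2 := T.pairing u (fun t ht => (hu t ht).1) (fun x => cut L c s ε x • (z - x))
    ((cut_differentiable hs hε).continuous.smul (by fun_prop)) (s * D) (by
      intro x
      by_cases hx : ∀ i, 0 < laff L c i x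
      · rw [norm_smul, Real.norm_of_nonneg (cut_nonneg hs hε x)]
        exact mul_le_mul (cut_le hs hε x) (hD x hx) (norm_nonneg _) hs.le
      · rw [cut_zero hx]; simp; positivity) (by
      intro x hx
      have : ¬ ∀ i, 0 < laff L c i x := by
        intro h
        rw [hΩ.frontier_eq] at hx
        exact hx.2 (hW h)
      rw [cut_zero this, zero_smul])
  have h3 := T.jump_edge_bound hb hK u hu
  have h4 := mul_le_mul_of_nonneg_left h3 (mul_nonneg hs.le hD0)
  have a1 := T.sqL2_nonneg u
  have a2 := T.gradSq_nonneg u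
  have a3 := T.jumpSq_nonneg u
  have h5 : (3 + D) * s * T.sqL2 u + D * s * T.gradSq u ≤ (3 + D) * s * T.normSq u := by
    unfold normSq
    have k1 : 0 ≤ s * T.gradSq u := by positivity
    have k2 : 0 ≤ (3 + D) * s * T.jumpSq u := by positivity
    linarith
  unfold sqL2 gradSq at h5
  linarith

lemma strip_bound (T : Triangulation Ω) (hΩ : IsOpen Ω) (hb : Bornology.IsBounded Ω) {K : ℝ}
    (hK : T.ShapeRegular K) (u : Tri → Pt → ℝ) (hu : T.PwH1 u) {s z}
    (hs : 0 < s) (hz : ∀ i, laff L c i z = 1 / 3)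
    (hW : {x | ∀ i, 0 < laff L c i x} ⊆ Ω) :
    ∑ t ∈ T.tris, ∫ x in t.openHull ∩ strip L c s, (u t x) ^ 2 ≤
      36 * ((Metric.diam Ω * (1 + 6 * |K| * (3 + Metric.diam Ω ^ 2)) + 3 + Metric.diam Ω) * s *
        T.normSq u) := by
  have key : Filter.Tendsto (fun n : ℕ => ∑ t ∈ T.tris, ∫ x in t.openHull,
        (strip L c s).indicator (fun x => cutm L c s (1 / ((n:ℝ) + 1)) x / 36 * (u t x) ^ 2) x)
      Filter.atTop (nhds (∑ t ∈ T.tris, ∫ x in t.openHull,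
        (strip L c s).indicator (fun x => (1:ℝ) / 36 * (u t x) ^ 2) x)) := by
    apply tendsto_finsetSum
    intro t ht
    obtain ⟨hc, hd, h1, h2⟩ := hu t ht
    apply tendsto_integral_of_dominated_convergence (fun x => (u t x) ^ 2)
    · intro n
      refine AEStronglyMeasurable.indicator ?_ (measurableSet_strip s)
      exact ((measurable_cutm s _).div_const _).aestronglyMeasurable.mul h1.aestronglyMeasurable
    · exact h1
    · intro n
      filter_upwards with x
      by_cases hx : x ∈ strip L c s
      · rw [indicator_of_mem hx]
        have hε : (0:ℝ) < 1 / ((n:ℝ) + 1) := by positivity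
        obtain ⟨m0, m1⟩ := cutm_bound hs hε hx.1
        rw [Real.norm_of_nonneg (by positivity)]
        have := sq_nonneg (u t x)
        calc _ ≤ 1 * (u t x) ^ 2 := by
              gcongr
              linarith
          _ = _ := one_mul _
      · rw [indicator_of_notMem hx]; simp; positivity
    · filter_upwards with x
      by_cases hx : x ∈ strip L c s
      · simp only [indicator_of_mem hx]
        apply Filter.Tendsto.mul_const
        apply Filter.Tendsto.div_const
        have hcont : ContinuousAt (fun ε : ℝ => cutm L c s ε x) 0 := by
          unfold cutm
          apply ContinuousAt.div
          · fun_prop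
          · fun_prop
          · simp
        have h0 : cutm L c s 0 x = 1 := by simp [cutm]
        have := hcont.tendsto.comp (tendsto_one_div_add_atTop_nhds_zero_nat (𝕜 := ℝ))
        rw [h0] at this
        exact this
      · simp only [indicator_of_notMem hx]
        exact tendsto_const_nhds
  have hle := le_of_tendsto' key fun n => T.eps_bound hΩ hb hK u hu hs
    (by positivity : (0:ℝ) < 1 / ((n:ℝ) + 1)) hz hW
  have e : ∑ t ∈ T.tris, ∫ x in t.openHull,
        (strip L c s).indicator (fun x => (1:ℝ) / 36 * (u t x) ^ 2) x =
      (1 / 36) * ∑ t ∈ T.tris, ∫ x in t.openHull ∩ strip L c s, (u t x) ^ 2 := by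
    rw [Finset.mul_sum]
    apply Finset.sum_congr rfl
    intro t _
    rw [setIntegral_indicator (measurableSet_strip s), integral_const_mul]
  rw [e] at hle
  linarith

end Triangulation

/-! ### Assembly -/

open Tri

lemma exists_laff (t : Tri) (h : t.Nondeg) : ∃ (L : Fin 3 → Pt →L[ℝ] ℝ) (c : Fin 3 → ℝ),
    ∀ x, laff L c 0 x = 1 - t.lamB x - t.lamC x ∧ laff L c 1 x = t.lamB x ∧
      laff L c 2 x = t.lamC x := by
  let p0 : Pt →L[ℝ] ℝ := EuclideanSpace.proj 0
  let p1 : Pt →L[ℝ] ℝ := EuclideanSpace.proj 1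
  let LB : Pt →L[ℝ] ℝ := (t.cross)⁻¹ • ((t.C 1 - t.A 1) • p0 - (t.C 0 - t.A 0) • p1)
  let LC : Pt →L[ℝ] ℝ := (t.cross)⁻¹ • ((t.B 0 - t.A 0) • p1 - (t.B 1 - t.A 1) • p0)
  let cB : ℝ := (t.cross)⁻¹ * (-(t.A 0) * (t.C 1 - t.A 1) + t.A 1 * (t.C 0 - t.A 0))
  let cC : ℝ := (t.cross)⁻¹ * (-(t.A 1) * (t.B 0 - t.A 0) + t.A 0 * (t.B 1 - t.A 1))
  have hB : ∀ x, LB x + cB = t.lamB x := by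
    intro x
    simp [LB, cB, p0, p1, lamB, div_eq_inv_mul]
    ring
  have hC : ∀ x, LC x + cC = t.lamC x := by
    intro x
    simp [LC, cC, p0, p1, lamC, div_eq_inv_mul]
    ring
  refine ⟨![-LB - LC, LB, LC], ![1 - cB - cC, cB, cC], fun x => ⟨?_, hB x, hC x⟩⟩
  rw [← hB, ← hC]
  simp [laff]
  ring

lemma frontier_near {Ω : Set Pt} (hne : Ω.Nonempty) (hb : Bornology.IsBounded Ω)
    {x : Pt} {δ : ℝ} (hx : Metric.infDist x (frontier Ω) ≤ δ) :
    ∃ y ∈ frontier Ω, ‖x - y‖ ≤ δ := by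
  have hf : (frontier Ω).Nonempty := by
    rw [nonempty_iff_ne_empty]
    intro h
    rcases isClopen_iff.mp (isClopen_iff_frontier_eq_empty.mpr h) with h' | h'
    · exact hne.ne_empty h'
    · rw [h'] at hb
      exact NormedSpace.unbounded_univ ℝ Pt hb
  obtain ⟨y, hy, e⟩ := isClosed_frontier.exists_infDist_eq_dist hf x
  exact ⟨y, hy, by rw [← dist_eq_norm, ← e]; exact hx⟩

lemma per_tri {Ω : Set Pt} (hΩ : IsOpen Ω) (hne : Ω.Nonempty) (hb : Bornology.IsBounded Ω)
    (K : ℝ) (t0 : Tri) (h0 : t0.Nondeg) (hsub : t0.openHull ⊆ Ω) :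
    ∃ C : ℝ, 0 ≤ C ∧ ∀ δ : ℝ, 0 < δ → ∀ T : Triangulation Ω, T.ShapeRegular K →
      ∀ u : Tri → Pt → ℝ, T.PwH1 u →
        (∑ t ∈ T.tris, ∫ x in (t.openHull ∩ {y | Metric.infDist y (frontier Ω) ≤ δ}) ∩ t0.openHull,
          (u t x) ^ 2) ≤ C * δ * T.normSq u := by
  obtain ⟨L, c, hL⟩ := exists_laff t0 h0
  have hW : {x | ∀ i, 0 < laff L c i x} = t0.openHull := by
    rw [t0.openHull_eq h0]
    ext x
    obtain ⟨e0, e1, e2⟩ := hL x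
    simp only [mem_ofPred_eq]
    rw [Fin.forall_fin_succ, Fin.forall_fin_two]
    change (0 < laff L c 0 x ∧ 0 < laff L c 1 x ∧ 0 < laff L c 2 x) ↔ _
    rw [e0, e1, e2]
    constructor
    · rintro ⟨a, b, d⟩; exact ⟨b, d, by linarith⟩
    · rintro ⟨a, b, d⟩; exact ⟨by linarith, a, b⟩
  have hz : ∀ i, laff L c i (t0.par (1/3, 1/3)) = 1 / 3 := by
    obtain ⟨e0, e1, e2⟩ := hL (t0.par (1/3, 1/3))
    rw [t0.lamB_par h0, t0.lamC_par h0] at e0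
    rw [t0.lamB_par h0] at e1
    rw [t0.lamC_par h0] at e2
    intro i
    fin_cases i
    · exact e0.trans (by norm_num)
    · exact e1
    · exact e2
  set Λ : ℝ := ∑ i, ‖L i‖ + 1 with hΛ
  have hΛi : ∀ i, ‖L i‖ ≤ Λ := by
    intro i
    have := Finset.single_le_sum (f := fun i => ‖L i‖) (fun _ _ => norm_nonneg _) (Finset.mem_univ i)
    linarith
  have hΛ0 : 0 < Λ := by
    have := Finset.sum_nonneg (s := Finset.univ) (f := fun i => ‖L i‖) (fun _ _ => norm_nonneg _)
    linarith
  set M : ℝ := Metric.diam Ω * (1 + 6 * |K| * (3 + Metric.diam Ω ^ 2)) + 3 + Metric.diam Ω with hM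
  have hM0 : 0 ≤ M := by
    have : 0 ≤ Metric.diam Ω := Metric.diam_nonneg
    positivity
  refine ⟨36 * M * Λ, by positivity, ?_⟩
  intro δ hδ T hK u hu
  have hs : 0 < Λ * δ := by positivity
  have hmain := T.strip_bound hΩ hb hK u hu hs hz (by rw [hW]; exact hsub)
  refine le_trans (Finset.sum_le_sum ?_) (hmain.trans (le_of_eq ?_))
  · intro t ht
    apply setIntegral_mono_set
    · exact (hu t ht).2.2.1.mono_set inter_subset_left
    · filter_upwards with x
      exact sq_nonneg _
    · apply Filter.Eventually.of_forall
      rintro x ⟨⟨hx1, hx2⟩, hx3⟩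
      refine ⟨hx1, ?_⟩
      rw [← hW] at hx3
      refine ⟨hx3, ?_⟩
      obtain ⟨y, hy, hxy⟩ := frontier_near hne hb hx2
      have hyW : ¬ ∀ i, 0 < laff L c i y := by
        intro h
        rw [hΩ.frontier_eq] at hy
        exact hy.2 (hsub (hW ▸ h))
      push Not at hyW
      obtain ⟨i, hi⟩ := hyW
      refine ⟨i, ?_⟩
      have e : laff L c i x - laff L c i y = L i (x - y) := by
        simp [laff]
      have b1 := (le_abs_self _).trans ((L i).le_opNorm (x - y))
      have b2 : ‖L i‖ * ‖x - y‖ ≤ Λ * δ :=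
        mul_le_mul (hΛi i) hxy (norm_nonneg _) hΛ0.le
      linarith
  · ring

lemma cover_bound {S : Finset Tri} {f : Pt → ℝ} (hf : ∀ x, 0 ≤ f x) {X : Set Pt}
    (hX : X ⊆ ⋃ t ∈ S, t.closedHull) (hXm : MeasurableSet X) (hi : IntegrableOn f X) :
    ∫ x in X, f x ≤ ∑ t ∈ S, ∫ x in X ∩ t.openHull, f x := by
  have hIntg : ∀ t ∈ S, IntegrableOn (t.openHull.indicator f) X := fun t _ =>
    hi.indicator t.measurableSet_openHull
  have e : ∑ t ∈ S, ∫ x in X ∩ t.openHull, f x = ∫ x in X, ∑ t ∈ S, t.openHull.indicator f x := by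
    rw [integral_finsetSum _ hIntg]
    apply Finset.sum_congr rfl
    intro t _
    rw [setIntegral_indicator t.measurableSet_openHull]
  rw [e]
  apply integral_mono_ae hi (integrable_finsetSum _ hIntg)
  have hnull : ∀ᵐ x ∂(volume.restrict X), ∀ t ∈ S, x ∉ frontier t.closedHull := by
    apply ae_restrict_of_ae
    rw [Filter.eventually_all_finset]
    intro t _
    exact measure_eq_zero_iff_ae_notMem.mp (t.convex_closedHull.addHaar_frontier volume)
  filter_upwards [hnull, ae_restrict_mem hXm] with x hx hxX
  obtain ⟨t, ht, hxt⟩ := mem_iUnion₂.mp (hX hxX)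
  have hxo : x ∈ t.openHull := by
    by_contra hcon
    apply hx t ht
    rw [t.isCompact_closedHull.isClosed.frontier_eq]
    exact ⟨hxt, hcon⟩
  calc f x = t.openHull.indicator f x := (indicator_of_mem hxo f).symm
    _ ≤ _ := Finset.single_le_sum (f := fun t : Tri => t.openHull.indicator f x)
      (fun t _ => indicator_nonneg (fun x _ => hf x) x) ht

/-- Boundary strip smallness: with `Ω_δ` the set of points of `Ω` within distance `δ` of
`∂Ω`, one has `∫_{Ω_δ} u² ≤ C δ ‖u‖²_{H¹_h}`, with `C` depending only on `Ω` and `𝒦`. -/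
theorem boundary_strip_smallness (Ω : Set Pt) (hΩ : IsPolygon Ω) (K : ℝ) :
    ∃ C : ℝ, 0 < C ∧ ∀ δ : ℝ, 0 < δ → ∀ T : Triangulation Ω, T.ShapeRegular K →
      ∀ u : Tri → Pt → ℝ, T.PwH1 u →
        (∑ t ∈ T.tris,
            ∫ x in t.openHull ∩ {y | Metric.infDist y (frontier Ω) ≤ δ}, (u t x) ^ 2)
          ≤ C * δ * T.normSq u := by
  obtain ⟨hne, hb, S, hS, hcov⟩ := hΩ
  have hop : IsOpen Ω := by rw [hcov]; exact isOpen_interior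
  have hsub : ∀ t0 ∈ S, t0.openHull ⊆ Ω := by
    intro t0 ht0
    rw [hcov]
    apply interior_mono
    exact subset_biUnion_of_mem (u := fun t : Tri => t.closedHull) ht0
  have hper : ∀ t0 : Tri, ∃ C : ℝ, t0 ∈ S → 0 ≤ C ∧ ∀ δ : ℝ, 0 < δ → ∀ T : Triangulation Ω,
      T.ShapeRegular K → ∀ u : Tri → Pt → ℝ, T.PwH1 u →
        (∑ t ∈ T.tris, ∫ x in (t.openHull ∩ {y | Metric.infDist y (frontier Ω) ≤ δ}) ∩ t0.openHull,
          (u t x) ^ 2) ≤ C * δ * T.normSq u := by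
    intro t0
    by_cases h : t0 ∈ S
    · obtain ⟨C, hC⟩ := per_tri hop hne hb K t0 (hS t0 h) (hsub t0 h)
      exact ⟨C, fun _ => hC⟩
    · exact ⟨0, fun h' => absurd h' h⟩
  choose C hC using hper
  have hsum : 0 ≤ ∑ t0 ∈ S, C t0 := Finset.sum_nonneg fun t0 h => (hC t0 h).1
  refine ⟨∑ t0 ∈ S, C t0 + 1, by linarith, ?_⟩
  intro δ hδ T hK u hu
  have hN : 0 ≤ T.normSq u := by
    have a1 := T.sqL2_nonneg u
    have a2 := T.gradSq_nonneg u
    have a3 := T.jumpSq_nonneg u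
    unfold Triangulation.normSq
    linarith
  have hcl : MeasurableSet {y : Pt | Metric.infDist y (frontier Ω) ≤ δ} :=
    (isClosed_le (Metric.continuous_infDist_pt _) continuous_const).measurableSet
  calc _ ≤ ∑ t ∈ T.tris, ∑ t0 ∈ S,
        ∫ x in (t.openHull ∩ {y | Metric.infDist y (frontier Ω) ≤ δ}) ∩ t0.openHull,
          (u t x) ^ 2 := by
        apply Finset.sum_le_sum
        intro t ht
        apply cover_bound (fun x => sq_nonneg _)
        · intro x hx
          have h1 := T.openHull_sub ht hx.1
          rw [hcov] at h1
          exact interior_subset h1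
        · exact t.measurableSet_openHull.inter hcl
        · exact (hu t ht).2.2.1.mono_set inter_subset_left
    _ = ∑ t0 ∈ S, ∑ t ∈ T.tris,
        ∫ x in (t.openHull ∩ {y | Metric.infDist y (frontier Ω) ≤ δ}) ∩ t0.openHull,
          (u t x) ^ 2 := Finset.sum_comm
    _ ≤ ∑ t0 ∈ S, C t0 * δ * T.normSq u := by
        apply Finset.sum_le_sum
        intro t0 h
        exact (hC t0 h).2 δ hδ T hK u hu
    _ = (∑ t0 ∈ S, C t0) * δ * T.normSq u := by rw [Finset.sum_mul, Finset.sum_mul]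
    _ ≤ _ := by
        have : 0 ≤ δ * T.normSq u := by positivity
        nlinarith
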